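/- arXiv:2405.06587 — 3 statements merged into one kernel-verified Lean document; each statement's English description precedes it below -/
import Mathlib

section
/- The matrix R is invertible and satisfies the Kauffman skein relation R − R⁻¹ = (r⁻¹s − rs⁻¹)·(1 − K), where 1 is the N²×N² identity matrix; equivalently, R·(R − (r⁻¹s − rs⁻¹)·(1 − K)) = 1 = (R − (r⁻¹s − rs⁻¹)·(1 − K))·R. (Corollary 3.14, combined with the inverse formula of Lemma 3.13.) -/
/-!
The candidate inverse `R' = R - (r⁻¹s - rs⁻¹)(1 - K)` is checked entry by entry.

Write `a'` for the reversed index. The entry formula `Rmat_apply` shows that `R` is the sum of a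
weighted flip `(a, b) ↦ (b, a)`, a diagonal term on pairs with `b < a`, and a term supported on rows
and columns of the form `(a, a')`; `candidate_apply` gives the analogous formula for `R'`. Hence both
matrices preserve the block on `{(a, b), (b, a)}` for each `b ≠ a'`, and the block on all the pairs
`(a, a')`.

On a block of the first kind `K` vanishes. If `a ≠ b`, the two flip weights are inverse to each other
(`flipWt_mul_swap`) and `R R' = 1` is the usual Hecke relation for a `2 × 2` matrix; if `a = b` it is
`(r⁻¹s)(rs⁻¹) = 1`.

On the block of the pairs `(a, a')` the relation `t² = r⁻¹s` enters. The product involves the sums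
`(t² - t⁻²) Σ t^(2 m_e)` over intervals of indices, and these telescope (`sum_potential`) because
`m_e` decreases by `2` at each step, apart from a correction at the middle index, where the flip
weight is `1` instead of `t⁻²`. What remains in `antidiag_block` is a rational identity for each
relative position of `a`, `c`, `a'` and the middle index.

Since the matrices are square, `R R' = 1` implies `R' R = 1`.
-/

open Matrix Finset
open scoped Kronecker

/-- The `N×N` matrix unit `E_{ab}` (1-based indices; zero if an index is out of range). -/
def Eunit (F : Type*) [Field F] (n a b : ℕ) :
    Matrix (Fin (2 * n + 1)) (Fin (2 * n + 1)) F :=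
  Matrix.of fun i j => if (i : ℕ) + 1 = a ∧ (j : ℕ) + 1 = b then (1 : F) else 0

/-- The primed index `i' = 2n+2−i`. -/
def pr (n i : ℕ) : ℕ := 2 * n + 2 - i

/-- The integers `m_i`: `m_i = 2n+1−2i` for `1 ≤ i ≤ n`, `m_{n+1} = 0`,
and `m_i = 2n+3−2i` for `n+2 ≤ i ≤ 2n+1`. -/
def mwt (n i : ℕ) : ℤ :=
  if i ≤ n then 2 * (n : ℤ) + 1 - 2 * (i : ℤ)
  else if i = n + 1 then 0
  else 2 * (n : ℤ) + 3 - 2 * (i : ℤ)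

/-- The matrix `K = Σ_{i,j} t^{m_i−m_j} E_{i,j'} ⊗ E_{i',j}`. -/
noncomputable def Kmat (F : Type*) [Field F] (n : ℕ) (t : F) :
    Matrix (Fin (2 * n + 1) × Fin (2 * n + 1)) (Fin (2 * n + 1) × Fin (2 * n + 1)) F :=
  ∑ i ∈ Icc 1 (2 * n + 1), ∑ j ∈ Icc 1 (2 * n + 1),
    t ^ (mwt n i - mwt n j) • (Eunit F n i (pr n j) ⊗ₖ Eunit F n (pr n i) j)

/-- The basic braided `R`-matrix of `U_{r,s}(so_{2n+1})` (Theorem 3.7). -/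
noncomputable def Rmat (F : Type*) [Field F] (n : ℕ) (r s t : F) :
    Matrix (Fin (2 * n + 1) × Fin (2 * n + 1)) (Fin (2 * n + 1) × Fin (2 * n + 1)) F :=
  (r⁻¹ * s) • (∑ i ∈ (Icc 1 (2 * n + 1)).erase (n + 1), Eunit F n i i ⊗ₖ Eunit F n i i)
  + (r⁻¹ * s⁻¹) • (
      (∑ i ∈ Icc 1 n, ∑ j ∈ Icc (i + 1) n, Eunit F n i j ⊗ₖ Eunit F n j i)
    + (∑ i ∈ Icc 2 n, ∑ j ∈ Icc (pr n (i - 1)) (pr n 1), Eunit F n i j ⊗ₖ Eunit F n j i)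
    + (∑ i ∈ Icc 1 (n - 1), ∑ j ∈ Icc (pr n n) (pr n (i + 1)), Eunit F n j i ⊗ₖ Eunit F n i j)
    + (∑ i ∈ Icc (pr n n) (pr n 2), ∑ j ∈ Icc (i + 1) (pr n 1), Eunit F n j i ⊗ₖ Eunit F n i j))
  + (r * s) • (
      (∑ i ∈ Icc 1 n, ∑ j ∈ Icc (i + 1) n, Eunit F n j i ⊗ₖ Eunit F n i j)
    + (∑ i ∈ Icc (pr n n) (pr n 2), ∑ j ∈ Icc (i + 1) (pr n 1), Eunit F n i j ⊗ₖ Eunit F n j i)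
    + (∑ i ∈ Icc 2 n, ∑ j ∈ Icc (pr n (i - 1)) (pr n 1), Eunit F n j i ⊗ₖ Eunit F n i j)
    + (∑ i ∈ Icc 1 (n - 1), ∑ j ∈ Icc (pr n n) (pr n (i + 1)), Eunit F n i j ⊗ₖ Eunit F n j i))
  + (∑ i ∈ (Icc 1 (2 * n + 1)).erase (n + 1), Eunit F n i (n + 1) ⊗ₖ Eunit F n (n + 1) i)
  + (∑ j ∈ (Icc 1 (2 * n + 1)).erase (n + 1), Eunit F n (n + 1) j ⊗ₖ Eunit F n j (n + 1))
  + (r * s⁻¹) • (∑ i ∈ (Icc 1 (2 * n + 1)).erase (n + 1), Eunit F n (pr n i) i ⊗ₖ Eunit F n i (pr n i))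
  + (r⁻¹ * s - r * s⁻¹) • (
      (∑ i ∈ Icc 1 (2 * n + 1), ∑ j ∈ Icc 1 (i - 1), Eunit F n i i ⊗ₖ Eunit F n j j)
    - (∑ i ∈ Icc 1 (2 * n + 1), ∑ j ∈ Icc 1 (i - 1),
        t ^ (mwt n i - mwt n j) • (Eunit F n i (pr n j) ⊗ₖ Eunit F n (pr n i) j)))
  + Eunit F n (n + 1) (n + 1) ⊗ₖ Eunit F n (n + 1) (n + 1)

/-! ### Entries of `R` and of the candidate inverse -/

section Entries

variable {F : Type*} [Field F] {n : ℕ}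

/-- A double sum over indices collapses to the single pair selected by a product of matrix units. -/
theorem sum_Eunit (S : Finset ℕ) (T : ℕ → Finset ℕ) (f : ℕ → ℕ → F) (x y : ℕ) :
    (∑ i ∈ S, ∑ j ∈ T i, if x = i ∧ y = j then f i j else 0) =
      if x ∈ S ∧ y ∈ T x then f x y else 0 := by
  have inner : ∀ i ∈ S, (∑ j ∈ T i, if x = i ∧ y = j then f i j else 0) =
      if x = i then (if y ∈ T i then f i y else 0) else 0 := by
    intro i _
    by_cases h : x = i <;> simp [h]
  rw [Finset.sum_congr rfl inner, Finset.sum_ite_eq]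
  by_cases h1 : x ∈ S <;> simp [h1]

theorem Eunit_flip_apply (S : Finset ℕ) (T : ℕ → Finset ℕ) (a b c d : Fin (2 * n + 1)) :
    (∑ i ∈ S, ∑ j ∈ T i, Eunit F n i j ⊗ₖ Eunit F n j i) (a, b) (c, d) =
      if c = b ∧ d = a then
        (if (a : ℕ) + 1 ∈ S ∧ (b : ℕ) + 1 ∈ T (a + 1) then (1 : F) else 0) else 0 := by
  rw [← sum_Eunit S T (fun _ _ => (1 : F)), ← mul_boole, Finset.sum_mul]
  simp only [Matrix.sum_apply, kroneckerMap_apply, Eunit, of_apply, Finset.sum_mul]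
  refine Finset.sum_congr rfl fun i _ => Finset.sum_congr rfl fun j _ => ?_
  simp only [Fin.ext_iff]
  grind

theorem Eunit_flip_apply' (S : Finset ℕ) (T : ℕ → Finset ℕ) (a b c d : Fin (2 * n + 1)) :
    (∑ i ∈ S, ∑ j ∈ T i, Eunit F n j i ⊗ₖ Eunit F n i j) (a, b) (c, d) =
      if c = b ∧ d = a then
        (if (b : ℕ) + 1 ∈ S ∧ (a : ℕ) + 1 ∈ T (b + 1) then (1 : F) else 0) else 0 := by
  rw [← sum_Eunit S T (fun _ _ => (1 : F)), ← mul_boole, Finset.sum_mul]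
  simp only [Matrix.sum_apply, kroneckerMap_apply, Eunit, of_apply, Finset.sum_mul]
  refine Finset.sum_congr rfl fun i _ => Finset.sum_congr rfl fun j _ => ?_
  simp only [Fin.ext_iff]
  grind

theorem Eunit_diag_apply (S : Finset ℕ) (T : ℕ → Finset ℕ) (a b c d : Fin (2 * n + 1)) :
    (∑ i ∈ S, ∑ j ∈ T i, Eunit F n i i ⊗ₖ Eunit F n j j) (a, b) (c, d) =
      if c = a ∧ d = b ∧ (a : ℕ) + 1 ∈ S ∧ (b : ℕ) + 1 ∈ T (a + 1) then (1 : F) else 0 := by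
  have := sum_Eunit S T (fun _ _ => if c = a ∧ d = b then (1 : F) else 0) (a + 1) (b + 1)
  simp only [Matrix.sum_apply, kroneckerMap_apply, Eunit, of_apply]
  trans (if (a : ℕ) + 1 ∈ S ∧ (b : ℕ) + 1 ∈ T (a + 1) then if c = a ∧ d = b then (1 : F) else 0
    else 0)
  · rw [← this]
    refine Finset.sum_congr rfl fun i _ => Finset.sum_congr rfl fun j _ => ?_
    simp only [Fin.ext_iff]
    grind
  · grind

theorem mwt_rev (a : Fin (2 * n + 1)) : mwt n (a.rev + 1) = -mwt n (a + 1) := by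
  have := a.isLt
  simp only [mwt, Fin.val_rev]
  split_ifs <;> omega

/-- In 0-based indices, the entry of `Σ t^(m_i - m_j) E_{i,j'} ⊗ E_{i',j}` at row `(a, a')` and
column `(c, c')` comes from `i = a`, `j = c'`, and `m_{c'} = -m_c` turns its exponent into
`m_a + m_c`. -/
theorem Eunit_cup_apply (t : F) (S : Finset ℕ) (T : ℕ → Finset ℕ) (a b c d : Fin (2 * n + 1)) :
    (∑ i ∈ S, ∑ j ∈ T i, t ^ (mwt n i - mwt n j) •
        (Eunit F n i (pr n j) ⊗ₖ Eunit F n (pr n i) j)) (a, b) (c, d) =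
      if b = a.rev ∧ d = c.rev ∧ (a : ℕ) + 1 ∈ S ∧ (c.rev : ℕ) + 1 ∈ T (a + 1) then
        t ^ (mwt n (a + 1) + mwt n (c + 1)) else 0 := by
  have := sum_Eunit S T (fun i j => if b = a.rev ∧ d = c.rev then
    t ^ (mwt n i - mwt n j) else 0) (a + 1) (c.rev + 1)
  simp only [Matrix.sum_apply, Matrix.smul_apply, smul_eq_mul, kroneckerMap_apply, Eunit,
    of_apply]
  trans (if (a : ℕ) + 1 ∈ S ∧ (c.rev : ℕ) + 1 ∈ T (a + 1) then if b = a.rev ∧ d = c.rev then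
    t ^ (mwt n (a + 1) - mwt n (c.rev + 1)) else 0 else 0)
  · rw [← this]
    refine Finset.sum_congr rfl fun i _ => Finset.sum_congr rfl fun j _ => ?_
    have hcond : (((a : ℕ) + 1 = i ∧ (c : ℕ) + 1 = pr n j) ∧ (b : ℕ) + 1 = pr n i ∧
        (d : ℕ) + 1 = j) ↔ ((a : ℕ) + 1 = i ∧ (c.rev : ℕ) + 1 = j) ∧ b = a.rev ∧ d = c.rev := by
      simp only [Fin.ext_iff, pr, Fin.val_rev]
      omega
    rw [← ite_and, ← if_congr hcond rfl rfl]
    grind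
  · rw [mwt_rev, sub_neg_eq_add, ← ite_and]
    exact if_congr (by tauto) rfl rfl

theorem Kmat_apply (t : F) (a b c d : Fin (2 * n + 1)) :
    Kmat F n t (a, b) (c, d) =
      if b = a.rev ∧ d = c.rev then t ^ (mwt n (a + 1) + mwt n (c + 1)) else 0 := by
  rw [Kmat, Eunit_cup_apply]
  refine if_congr ?_ rfl rfl
  have := a.isLt
  have := c.rev.isLt
  simp only [mem_Icc]
  grind

/-- `lowPair n x y` holds when `E_{x+1,y+1} ⊗ E_{y+1,x+1}` occurs in `R` with coefficient
`r⁻¹s⁻¹` (indices here are 0-based, as in `Fin (2 * n + 1)`). -/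
def lowPair (n x y : ℕ) : Prop :=
  (x < y ∧ y < n) ∨ (x < n ∧ 2 * n < x + y) ∨ (y < n ∧ n < x ∧ x + y < 2 * n) ∨ (n < y ∧ y < x)

instance (n x y : ℕ) : Decidable (lowPair n x y) := by unfold lowPair; infer_instance

/-- The coefficient of the flip `E_{ab} ⊗ E_{ba}` in `R`. -/
def flipWt (r s : F) (a b : Fin (2 * n + 1)) : F :=
  if (a : ℕ) = n ∨ (b : ℕ) = n then 1
  else if a = b then r⁻¹ * s
  else if b = a.rev then r * s⁻¹
  else if lowPair n a b then r⁻¹ * s⁻¹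
  else r * s

/-- Indicators of pairwise exclusive conditions add up to the indicator of their disjunction. -/
theorem sum_ite_disjoint {p₁ p₂ p₃ p₄ p : Prop} [Decidable p₁] [Decidable p₂] [Decidable p₃]
    [Decidable p₄] [Decidable p] (h : p ↔ p₁ ∨ p₂ ∨ p₃ ∨ p₄) (h12 : ¬ (p₁ ∧ p₂))
    (h3 : ¬ ((p₁ ∨ p₂) ∧ p₃)) (h4 : ¬ ((p₁ ∨ p₂ ∨ p₃) ∧ p₄)) :
    ((if p₁ then (1 : F) else 0) + (if p₂ then 1 else 0) + (if p₃ then 1 else 0) +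
      (if p₄ then 1 else 0)) = if p then 1 else 0 := by
  by_cases p₁ <;> by_cases p₂ <;> by_cases p₃ <;> by_cases p₄ <;> simp_all

/-- The four ranges with coefficient `r⁻¹s⁻¹` are disjoint and together make up `lowPair`. -/
theorem sum_low_ite (n x y : ℕ) (hx : x < 2 * n + 1) (hy : y < 2 * n + 1) :
    ((if (1 ≤ x + 1 ∧ x + 1 ≤ n) ∧ x + 1 + 1 ≤ y + 1 ∧ y + 1 ≤ n then (1 : F) else 0)
      + (if (2 ≤ x + 1 ∧ x + 1 ≤ n) ∧ pr n (x + 1 - 1) ≤ y + 1 ∧ y + 1 ≤ pr n 1 then 1 else 0)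
      + (if (1 ≤ y + 1 ∧ y + 1 ≤ n - 1) ∧ pr n n ≤ x + 1 ∧ x + 1 ≤ pr n (y + 1 + 1) then 1 else 0)
      + (if (pr n n ≤ y + 1 ∧ y + 1 ≤ pr n 2) ∧ y + 1 + 1 ≤ x + 1 ∧ x + 1 ≤ pr n 1 then 1 else 0))
      = if lowPair n x y then 1 else 0 := by
  apply sum_ite_disjoint <;> simp only [pr, lowPair] <;> omega

/-- The four ranges with coefficient `rs` are disjoint and consist of the transposed pairs. -/
theorem sum_high_ite (n x y : ℕ) (hx : x < 2 * n + 1) (hy : y < 2 * n + 1) :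
    ((if (1 ≤ y + 1 ∧ y + 1 ≤ n) ∧ y + 1 + 1 ≤ x + 1 ∧ x + 1 ≤ n then (1 : F) else 0)
      + (if (pr n n ≤ x + 1 ∧ x + 1 ≤ pr n 2) ∧ x + 1 + 1 ≤ y + 1 ∧ y + 1 ≤ pr n 1 then 1 else 0)
      + (if (2 ≤ y + 1 ∧ y + 1 ≤ n) ∧ pr n (y + 1 - 1) ≤ x + 1 ∧ x + 1 ≤ pr n 1 then 1 else 0)
      + (if (1 ≤ x + 1 ∧ x + 1 ≤ n - 1) ∧ pr n n ≤ y + 1 ∧ y + 1 ≤ pr n (x + 1 + 1) then 1 else 0))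
      = if lowPair n y x then 1 else 0 := by
  apply sum_ite_disjoint <;> simp only [pr, lowPair] <;> omega

/-- Exchanging the two indices exchanges the coefficients `r⁻¹s⁻¹` and `rs`. -/
theorem lowPair_swap {n x y : ℕ} (hx : x ≠ n) (hy : y ≠ n) (hxy : x ≠ y) (hr : x + y ≠ 2 * n) :
    lowPair n y x ↔ ¬ lowPair n x y := by
  simp only [lowPair]; omega

theorem not_lowPair {n x y : ℕ} (h : x = n ∨ y = n ∨ x = y ∨ x + y = 2 * n) :
    ¬ lowPair n x y := by
  simp only [lowPair]; omega

set_option maxHeartbeats 1000000 in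
/-- The entries of `R`: a weighted flip, a diagonal part, and a part supported on rows and columns
of the form `(a, a')`. -/
theorem Rmat_apply (r s t : F) (a b c d : Fin (2 * n + 1)) :
    Rmat F n r s t (a, b) (c, d) =
      (if c = b ∧ d = a then flipWt r s a b else 0)
      + (r⁻¹ * s - r * s⁻¹) * ((if c = a ∧ d = b ∧ b < a then 1 else 0)
        - (if b = a.rev ∧ d = c.rev ∧ c.rev < a then
            t ^ (mwt n (a + 1) + mwt n (c + 1)) else 0)) := by
  -- The sums over a single index are double sums whose inner range is a singleton.
  have s1 : (∑ i ∈ (Icc 1 (2 * n + 1)).erase (n + 1),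
      Eunit F n i i ⊗ₖ Eunit F n i i) (a, b) (c, d) =
      if c = b ∧ d = a then (if a = b ∧ (a : ℕ) ≠ n then (1 : F) else 0) else 0 := by
    have := Eunit_flip_apply (F := F) ((Icc 1 (2 * n + 1)).erase (n + 1)) (fun i => {i}) a b c d
    simp only [sum_singleton] at this
    rw [this]
    have := a.isLt
    simp only [mem_erase, mem_Icc, mem_singleton, Fin.ext_iff]
    grind
  have s2 : (∑ i ∈ (Icc 1 (2 * n + 1)).erase (n + 1),
      Eunit F n i (n + 1) ⊗ₖ Eunit F n (n + 1) i) (a, b) (c, d) =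
      if c = b ∧ d = a then (if (b : ℕ) = n ∧ (a : ℕ) ≠ n then (1 : F) else 0) else 0 := by
    have := Eunit_flip_apply (F := F) ((Icc 1 (2 * n + 1)).erase (n + 1)) (fun i => {n + 1}) a b c d
    simp only [sum_singleton] at this
    rw [this]
    have := a.isLt
    simp only [mem_erase, mem_Icc, mem_singleton]
    grind
  have s3 : (∑ i ∈ (Icc 1 (2 * n + 1)).erase (n + 1),
      Eunit F n (n + 1) i ⊗ₖ Eunit F n i (n + 1)) (a, b) (c, d) =
      if c = b ∧ d = a then (if (a : ℕ) = n ∧ (b : ℕ) ≠ n then (1 : F) else 0) else 0 := by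
    have := Eunit_flip_apply' (F := F) ((Icc 1 (2 * n + 1)).erase (n + 1)) (fun i => {n + 1})
      a b c d
    simp only [sum_singleton] at this
    rw [this]
    have := b.isLt
    simp only [mem_erase, mem_Icc, mem_singleton]
    grind
  have s4 : (∑ i ∈ (Icc 1 (2 * n + 1)).erase (n + 1),
      Eunit F n (pr n i) i ⊗ₖ Eunit F n i (pr n i)) (a, b) (c, d) =
      if c = b ∧ d = a then (if b = a.rev ∧ (a : ℕ) ≠ n then (1 : F) else 0) else 0 := by
    have := Eunit_flip_apply' (F := F) ((Icc 1 (2 * n + 1)).erase (n + 1)) (fun i => {pr n i})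
      a b c d
    simp only [sum_singleton] at this
    rw [this]
    have := b.isLt
    have := a.isLt
    simp only [mem_erase, mem_Icc, mem_singleton, pr, Fin.ext_iff, Fin.val_rev]
    grind
  have s5 : (Eunit F n (n + 1) (n + 1) ⊗ₖ Eunit F n (n + 1) (n + 1)) (a, b) (c, d) =
      if c = b ∧ d = a then (if (a : ℕ) = n ∧ (b : ℕ) = n then (1 : F) else 0) else 0 := by
    simp only [kroneckerMap_apply, Eunit, of_apply, Fin.ext_iff]
    grind
  have ha := a.isLt
  have hb := b.isLt
  have hd : (a : ℕ) + 1 ∈ Icc 1 (2 * n + 1) := by simp only [mem_Icc]; omega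
  have hlt : ∀ x : Fin (2 * n + 1), (x : ℕ) + 1 ∈ Icc 1 ((a : ℕ) + 1 - 1) ↔ x < a := by
    intro x; simp only [mem_Icc, Fin.lt_def]; omega
  simp only [Rmat, Matrix.add_apply, Matrix.sub_apply, Matrix.smul_apply, smul_eq_mul, s1, s2, s3,
    s4, s5, Eunit_diag_apply, Eunit_cup_apply, Eunit_flip_apply, Eunit_flip_apply', hd, hlt,
    true_and]
  by_cases hf : c = b ∧ d = a
  · simp only [hf, and_self, if_true]
    simp only [mem_Icc, sum_low_ite n a b ha hb, sum_high_ite n a b ha hb]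
    clear s1 s2 s3 s4 s5 hd hlt
    generalize (r⁻¹ * s - r * s⁻¹) * _ = X
    simp only [flipWt, Fin.ext_iff, Fin.val_rev]
    have hrev : (b : ℕ) = 2 * n + 1 - (a + 1) ↔ (a : ℕ) + b = 2 * n := by omega
    simp only [hrev]
    by_cases h : (a : ℕ) = n ∨ (b : ℕ) = n ∨ (a : ℕ) = b ∨ (a : ℕ) + b = 2 * n
    · rw [if_neg (not_lowPair h), if_neg (not_lowPair (by omega))]
      grind
    · push Not at h
      simp only [lowPair_swap h.1 h.2.1 h.2.2.1 h.2.2.2, h]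
      by_cases hP : lowPair n a b <;> simp [hP]
  · simp [hf]

/-- The entries of the candidate inverse `R - (r⁻¹s - rs⁻¹)(1 - K)`. -/
theorem candidate_apply (r s t : F) (a b c d : Fin (2 * n + 1)) :
    (Rmat F n r s t - (r⁻¹ * s - r * s⁻¹) • (1 - Kmat F n t)) (a, b) (c, d) =
      (if c = b ∧ d = a then flipWt r s a b else 0)
      - (r⁻¹ * s - r * s⁻¹) * (if c = a ∧ d = b ∧ a ≤ b then 1 else 0)
      + (r⁻¹ * s - r * s⁻¹) * (if b = a.rev ∧ d = c.rev ∧ a ≤ c.rev then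
            t ^ (mwt n (a + 1) + mwt n (c + 1)) else 0) := by
  simp only [Matrix.sub_apply, Matrix.smul_apply, smul_eq_mul, Rmat_apply, Kmat_apply,
    Matrix.one_apply, Prod.mk.injEq]
  have e1 : (if c = a ∧ d = b ∧ b < a then (1 : F) else 0) - (if a = c ∧ b = d then 1 else 0) =
      -(if c = a ∧ d = b ∧ a ≤ b then 1 else 0) := by
    rcases lt_or_ge b a with h | h
    · simp [h, not_le.mpr h, eq_comm]
    · simp [h, not_lt.mpr h, eq_comm]
  have e2 : (if b = a.rev ∧ d = c.rev ∧ c.rev < a then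
        t ^ (mwt n (a + 1) + mwt n (c + 1)) else 0)
      - (if b = a.rev ∧ d = c.rev then t ^ (mwt n (a + 1) + mwt n (c + 1)) else 0) =
      -(if b = a.rev ∧ d = c.rev ∧ a ≤ c.rev then
        t ^ (mwt n (a + 1) + mwt n (c + 1)) else 0) := by
    rcases lt_or_ge c.rev a with h | h
    · simp [h, not_le.mpr h]
    · simp [h, not_lt.mpr h]
  linear_combination (r⁻¹ * s - r * s⁻¹) * e1 - (r⁻¹ * s - r * s⁻¹) * e2

/-- The product of row `(a, b)` of `R` with a vector `v`. -/
theorem Rmat_row_sum (r s t : F) (a b : Fin (2 * n + 1))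
    (v : Fin (2 * n + 1) × Fin (2 * n + 1) → F) :
    ∑ p, Rmat F n r s t (a, b) p * v p = flipWt r s a b * v (b, a)
      + (r⁻¹ * s - r * s⁻¹) * ((if b < a then v (a, b) else 0)
        - (if b = a.rev then ∑ e : Fin (2 * n + 1), (if a.rev < e then
            t ^ (mwt n (a + 1) + mwt n (e + 1)) * v (e, e.rev) else 0) else 0)) := by
  have h1 : ∑ p : Fin (2 * n + 1) × Fin (2 * n + 1),
      (if p.1 = b ∧ p.2 = a then flipWt r s a b else 0) * v p = flipWt r s a b * v (b, a) := by
    rw [Finset.sum_eq_single (b, a)] <;> grind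
  have h2 : ∑ p : Fin (2 * n + 1) × Fin (2 * n + 1),
      (if p.1 = a ∧ p.2 = b ∧ b < a then 1 else 0) * v p = if b < a then v (a, b) else 0 := by
    rw [Finset.sum_eq_single (a, b)] <;> grind
  have h3 : ∑ p : Fin (2 * n + 1) × Fin (2 * n + 1),
      (if b = a.rev ∧ p.2 = p.1.rev ∧ p.1.rev < a then
        t ^ (mwt n (a + 1) + mwt n (p.1 + 1)) else 0) * v p =
      if b = a.rev then ∑ e : Fin (2 * n + 1), (if a.rev < e then
            t ^ (mwt n (a + 1) + mwt n (e + 1)) * v (e, e.rev) else 0) else 0 := by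
    rw [Fintype.sum_prod_type]
    split_ifs with hb
    · refine Finset.sum_congr rfl fun e _ => ?_
      have : e.rev < a ↔ a.rev < e := by simp only [Fin.lt_def, Fin.val_rev]; omega
      rw [Finset.sum_eq_single e.rev] <;> grind
    · simp [hb]
  rw [← h1, ← h2, ← h3, ← Finset.sum_sub_distrib, Finset.mul_sum, ← Finset.sum_add_distrib]
  refine Finset.sum_congr rfl fun p _ => ?_
  obtain ⟨c, d⟩ := p
  rw [Rmat_apply]
  ring

/-! ### Telescoping sums of powers of `t` -/

/-- A primitive, up to sign, of `(t² - t⁻²) t^(2 m_i)` with respect to the (0-based) index. The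
integers `m_i` drop by `2` at each step except around the middle index `n`, where they go
`1, 0, -1`; the constants at and past `n` compensate for this irregularity. -/
def potential (n : ℕ) (t : F) (x : ℕ) : F :=
  if x < n then t ^ (2 * mwt n (x + 1) - 2)
  else if x = n then 1 - (t ^ (2 : ℤ) - t ^ (-2 : ℤ))
  else t ^ (2 * mwt n (x + 1) - 2) - (t ^ (2 : ℤ) - t ^ (-2 : ℤ))

theorem potential_step {t : F} (ht : t ≠ 0) (x : ℕ) :
    (t ^ (2 : ℤ) - t ^ (-2 : ℤ)) * t ^ (2 * mwt n (x + 1 + 1)) =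
      potential n t x - potential n t (x + 1) := by
  have key (k : ℤ) : (t ^ (2 : ℤ) - t ^ (-2 : ℤ)) * t ^ (2 * k) =
      t ^ (2 * k + 2) - t ^ (2 * k - 2) := by
    rw [sub_mul, ← zpow_add₀ ht, ← zpow_add₀ ht]
    ring_nf
  have e (k l : ℤ) (h : k = l) : t ^ k = t ^ l := by rw [h]
  simp only [potential]
  rcases lt_trichotomy (x + 1) n with h | h | h
  · rw [if_pos (by omega), if_pos h, key]
    congr 1
    apply e; simp only [mwt]; split_ifs <;> omega
  · have h1 : mwt n (x + 1) = 1 := by simp only [mwt]; split_ifs <;> omega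
    have h2 : mwt n (x + 1 + 1) = 0 := by simp only [mwt]; split_ifs <;> omega
    rw [if_pos (by omega), if_neg (by omega), if_pos h, h1, h2]
    simp
  · rw [if_neg (by omega), if_neg (by omega : ¬ x + 1 < n), if_neg (by omega : ¬ x + 1 = n), key]
    by_cases hx : x = n
    · have h2 : mwt n (x + 1 + 1) = -1 := by simp only [mwt]; split_ifs <;> omega
      rw [if_pos hx, h2]
      simp
    · rw [if_neg hx, sub_sub_sub_cancel_right]
      congr 1
      apply e; simp only [mwt]; split_ifs <;> omega

theorem sum_potential {t : F} (ht : t ≠ 0) {x y : ℕ} (hxy : x ≤ y) :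
    (t ^ (2 : ℤ) - t ^ (-2 : ℤ)) * ∑ e ∈ Ioc x y, t ^ (2 * mwt n (e + 1)) =
      potential n t x - potential n t y := by
  induction y, hxy using Nat.le_induction with
  | base => simp
  | succ y hy ih =>
    rw [Finset.sum_Ioc_succ_top hy, mul_add, ih, potential_step ht]
    ring

theorem sum_fin_potential {t : F} (ht : t ≠ 0) (x y : Fin (2 * n + 1)) :
    (t ^ (2 : ℤ) - t ^ (-2 : ℤ)) * ∑ e : Fin (2 * n + 1),
        (if x < e ∧ e ≤ y then t ^ (2 * mwt n (e + 1)) else 0) =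
      if x ≤ y then potential n t x - potential n t y else 0 := by
  simp only [Fin.lt_def, Fin.le_def]
  rw [Fin.sum_univ_eq_sum_range
    (fun e => if (x : ℕ) < e ∧ e ≤ (y : ℕ) then t ^ (2 * mwt n (e + 1)) else 0) (2 * n + 1),
    ← Finset.sum_filter]
  have : (range (2 * n + 1)).filter (fun e => (x : ℕ) < e ∧ e ≤ (y : ℕ)) = Ioc (x : ℕ) y := by
    ext e
    have := y.isLt
    simp only [mem_filter, mem_range, mem_Ioc]
    omega
  rw [this]
  split_ifs with h
  · exact sum_potential ht h
  · rw [Finset.Ioc_eq_empty (by omega)]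
    simp

/-! ### The blocks of `R` -/

/-- Off the antidiagonal, the flip coefficients of `(a, b)` and `(b, a)` are inverse to each other,
which makes the block of `R` on `{(a, b), (b, a)}` a Hecke-type `2 × 2` matrix. -/
theorem flipWt_mul_swap {r s : F} (hr : r ≠ 0) (hs : s ≠ 0) {a b : Fin (2 * n + 1)}
    (hab : a ≠ b) (hrev : b ≠ a.rev) : flipWt r s a b * flipWt r s b a = 1 := by
  have h1 : (a : ℕ) ≠ b := fun h => hab (Fin.ext h)
  have h2 : (a : ℕ) + b ≠ 2 * n := fun h => hrev (Fin.ext (by rw [Fin.val_rev]; omega))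
  have h3 : a ≠ b.rev := fun h => h2 (by rw [h, Fin.val_rev]; omega)
  by_cases ha : (a : ℕ) = n
  · simp [flipWt, ha]
  by_cases hb : (b : ℕ) = n
  · simp [flipWt, hb]
  simp only [flipWt, ha, hb, hab, hab.symm, hrev, h3, lowPair_swap ha hb h1 h2, or_self, if_false]
  by_cases hP : lowPair n a b <;> simp [hP] <;> field_simp

theorem flipWt_self {r s : F} {a : Fin (2 * n + 1)} (ha : (a : ℕ) ≠ n) :
    flipWt r s a a = r⁻¹ * s := by simp [flipWt, ha]

theorem flipWt_rev {r s : F} (a : Fin (2 * n + 1)) :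
    flipWt r s a a.rev = if (a : ℕ) = n then 1 else r * s⁻¹ := by
  by_cases ha : (a : ℕ) = n
  · simp [flipWt, ha]
  · have h1 : ¬ (a.rev : ℕ) = n := by rw [Fin.val_rev]; omega
    have h2 : a ≠ a.rev := fun h => ha (by have := congrArg Fin.val h; rw [Fin.val_rev] at this; omega)
    simp only [flipWt, ha, h1, h2, or_self, if_false, if_true]

/-- Up to the factor `-(r⁻¹s - rs⁻¹)`, this is the product of row `(a, a')` of the summand
`Σ_{i>j} t^(m_i - m_j) E_{i,j'} ⊗ E_{i',j}` of `R` with column `(c, c')` of the candidate inverse.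
The `K`-like part of the candidate contributes a sum of powers `t^(2 m_e)`, which telescopes through
`potential`; the flip and diagonal parts contribute at most one term each. -/
theorem antidiag_sum {r s t : F} (ht : t ≠ 0) (hq : r⁻¹ * s = t ^ (2 : ℤ))
    (hq' : r * s⁻¹ = t ^ (-2 : ℤ)) (a c : Fin (2 * n + 1)) :
    (∑ e : Fin (2 * n + 1), (if a.rev < e then t ^ (mwt n (a + 1) + mwt n (e + 1)) *
      (Rmat F n r s t - (r⁻¹ * s - r * s⁻¹) • (1 - Kmat F n t)) (e, e.rev) (c, c.rev) else 0)) =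
    (if c < a then t ^ (mwt n (a + 1) - mwt n (c + 1)) * (if (c : ℕ) = n then 1 else t ^ (-2 : ℤ))
      else 0)
    - (t ^ (2 : ℤ) - t ^ (-2 : ℤ)) * (if a.rev < c ∧ c ≤ c.rev then
      t ^ (mwt n (a + 1) + mwt n (c + 1)) else 0)
    + t ^ (mwt n (a + 1) + mwt n (c + 1)) *
      (if a.rev ≤ c.rev then potential n t a.rev - potential n t c.rev else 0) := by
  rw [← sum_fin_potential ht a.rev c.rev, mul_left_comm]
  have h1 : (if c < a then t ^ (mwt n (a + 1) - mwt n (c + 1)) *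
      (if (c : ℕ) = n then 1 else t ^ (-2 : ℤ)) else 0) =
      ∑ e : Fin (2 * n + 1), if e = c.rev ∧ c < a then t ^ (mwt n (a + 1) - mwt n (c + 1)) *
        (if (c : ℕ) = n then 1 else t ^ (-2 : ℤ)) else 0 := by
    rw [Finset.sum_eq_single c.rev] <;> grind
  have h2 : (if a.rev < c ∧ c ≤ c.rev then t ^ (mwt n (a + 1) + mwt n (c + 1)) else 0) =
      ∑ e : Fin (2 * n + 1), if e = c ∧ a.rev < c ∧ c ≤ c.rev then
        t ^ (mwt n (a + 1) + mwt n (c + 1)) else 0 := by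
    rw [Finset.sum_eq_single c] <;> grind
  rw [h1, h2]
  simp only [Finset.mul_sum]
  rw [← Finset.sum_sub_distrib, ← Finset.sum_add_distrib]
  -- The two sides now agree summand by summand.
  refine Finset.sum_congr rfl fun e _ => ?_
  rw [candidate_apply, flipWt_rev, hq, hq']
  have hexp : t ^ (mwt n (a + 1) + mwt n (e + 1)) * t ^ (mwt n (e + 1) + mwt n (c + 1)) =
      t ^ (mwt n (a + 1) + mwt n (c + 1)) * t ^ (2 * mwt n (e + 1)) := by
    rw [← zpow_add₀ ht, ← zpow_add₀ ht]; ring_nf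
  by_cases hae : a.rev < e
  · have t1 : t ^ (mwt n (a + 1) + mwt n (e + 1)) *
        (if c = e.rev ∧ c.rev = e then (if (e : ℕ) = n then 1 else t ^ (-2 : ℤ)) else 0) =
        if e = c.rev ∧ c < a then t ^ (mwt n (a + 1) - mwt n (c + 1)) *
          (if (c : ℕ) = n then 1 else t ^ (-2 : ℤ)) else 0 := by
      by_cases hec : e = c.rev
      · subst hec
        have hmid : (c.rev : ℕ) = n ↔ (c : ℕ) = n := by rw [Fin.val_rev]; omega
        have hc : c = c.rev.rev ∧ c.rev = c.rev := ⟨(Fin.rev_rev c).symm, rfl⟩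
        have hc' : c.rev = c.rev ∧ c < a := ⟨rfl, Fin.rev_lt_rev.mp hae⟩
        rw [if_pos hc, if_pos hc', mwt_rev, if_congr hmid rfl rfl, sub_eq_add_neg]
      · rw [if_neg fun h => hec h.2.symm, if_neg fun h => hec h.1, mul_zero]
    have t2 : t ^ (mwt n (a + 1) + mwt n (e + 1)) *
        (if c = e ∧ c.rev = e.rev ∧ e ≤ e.rev then 1 else 0) =
        if e = c ∧ a.rev < c ∧ c ≤ c.rev then t ^ (mwt n (a + 1) + mwt n (c + 1)) else 0 := by
      by_cases hec : c = e
      · subst hec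
        simp [hae]
      · rw [if_neg fun h => hec h.1, if_neg fun h => hec h.1.symm, mul_zero]
    have t3 : t ^ (mwt n (a + 1) + mwt n (e + 1)) *
        (if e.rev = e.rev ∧ c.rev = c.rev ∧ e ≤ c.rev then
          t ^ (mwt n (e + 1) + mwt n (c + 1)) else 0) =
        t ^ (mwt n (a + 1) + mwt n (c + 1)) *
          (if a.rev < e ∧ e ≤ c.rev then t ^ (2 * mwt n (e + 1)) else 0) := by
      by_cases hec : e ≤ c.rev
      · rw [if_pos ⟨rfl, rfl, hec⟩, if_pos ⟨hae, hec⟩, hexp]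
      · rw [if_neg fun h => hec h.2.2, if_neg fun h => hec h.2, mul_zero, mul_zero]
    rw [if_pos hae]
    linear_combination t1 - (t ^ (2 : ℤ) - t ^ (-2 : ℤ)) * t2 + (t ^ (2 : ℤ) - t ^ (-2 : ℤ)) * t3
  · have : ¬ (e = c.rev ∧ c < a) := fun h => hae (h.1 ▸ Fin.rev_lt_rev.mpr h.2)
    have : ¬ (e = c ∧ a.rev < c ∧ c ≤ c.rev) := fun h => hae (h.1 ▸ h.2.1)
    simp [*]

/-- On the span of the vectors indexed by `(a, a')`, the candidate is a right inverse of `R`.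
Once the sum over `e` is telescoped, each entry is a rational identity in `t^(m_a)`, `t^(m_c)` and
`t²`, whose shape depends only on the order relations among `a`, `c`, `a'` and the middle index. -/
theorem antidiag_block {r s t : F} (ht : t ≠ 0) (hq : r⁻¹ * s = t ^ (2 : ℤ))
    (hq' : r * s⁻¹ = t ^ (-2 : ℤ)) (a c : Fin (2 * n + 1)) :
    ∑ p, Rmat F n r s t (a, a.rev) p *
      (Rmat F n r s t - (r⁻¹ * s - r * s⁻¹) • (1 - Kmat F n t)) p (c, c.rev) =
      if a = c then 1 else 0 := by
  have hX := candidate_apply r s t a.rev a c c.rev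
  rw [Rmat_row_sum, if_pos rfl, antidiag_sum ht hq hq', hX, candidate_apply, flipWt_rev, hq, hq']
  have hw : flipWt r s a.rev a = if (a : ℕ) = n then 1 else t ^ (-2 : ℤ) := by
    have := flipWt_rev (r := r) (s := s) a.rev
    rw [Fin.rev_rev] at this
    rw [this, hq']
    refine if_congr ?_ rfl rfl
    rw [Fin.val_rev]; omega
  rw [hw]
  have hA := zpow_ne_zero (mwt n (a + 1)) ht
  have hC := zpow_ne_zero (mwt n (c + 1)) ht
  have hmA : (a : ℕ) = n → t ^ (mwt n (a + 1)) = 1 := by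
    intro h; simp [h, mwt]
  have hmC : (c : ℕ) = n → t ^ (mwt n (c + 1)) = 1 := by
    intro h; simp [h, mwt]
  have hac : (a : ℕ) = c → t ^ (mwt n (a + 1)) = t ^ (mwt n (c + 1)) := by
    intro h; rw [h]
  have hlta := a.isLt
  have hltc := c.isLt
  have hsq (k : ℤ) : t ^ (2 * k) = t ^ k * t ^ k := by rw [two_mul, zpow_add₀ ht]
  have hm2 : t ^ (-2 : ℤ) = (t ^ (2 : ℤ))⁻¹ := _root_.zpow_neg t 2
  simp only [potential, mwt_rev, Fin.rev_rev, hsq, hm2, zpow_add₀ ht, zpow_sub₀ ht, mul_neg,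
    _root_.zpow_neg, true_and]
  simp only [Fin.ext_iff, Fin.lt_def, Fin.le_def, Fin.val_rev]
  clear hX hw hsq hm2 hq hq'
  have hT : t ^ (2 : ℤ) ≠ 0 := zpow_ne_zero 2 ht
  -- From here on the powers of `t` are independent nonzero parameters, related only when `a = c`
  -- or when one of the indices is the middle one.
  generalize t ^ (mwt n (a + 1)) = A at *
  generalize t ^ (mwt n (c + 1)) = C at *
  generalize t ^ (2 : ℤ) = T at *
  rcases lt_trichotomy (a : ℕ) n with h1 | h1 | h1 <;>
    rcases lt_trichotomy (c : ℕ) n with h2 | h2 | h2 <;>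
    rcases lt_trichotomy (a : ℕ) c with h3 | h3 | h3 <;>
    rcases lt_trichotomy ((a : ℕ) + c) (2 * n) with h4 | h4 | h4 <;>
    first
    | (exfalso; omega)
    | (simp (disch := omega) only [if_pos, if_neg]
       first
       | ring1
       | (field_simp; done)
       | (field_simp; ring1)
       | (have e := hac (by omega); subst e; field_simp; ring1)
       | (have e := hmA (by omega); subst e; field_simp; ring1)
       | (have e := hmC (by omega); subst e; field_simp; ring1))

end Entries

/-- **Corollary 3.14 + Lemma 3.13.** `R` is invertible and satisfies the Kauffman skein
relation `R − R⁻¹ = (r⁻¹s − rs⁻¹)(1 − K)`; equivalently,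
`R (R − (r⁻¹s − rs⁻¹)(1 − K)) = 1 = (R − (r⁻¹s − rs⁻¹)(1 − K)) R`. -/
theorem kauffman_skein (n : ℕ) (hn : 1 ≤ n)
    (F : Type*) [Field F] (r s t : F)
    (hr : r ≠ 0) (hs : s ≠ 0) (ht : t ≠ 0) (hts : t ^ 2 = r⁻¹ * s) :
    Rmat F n r s t * (Rmat F n r s t - (r⁻¹ * s - r * s⁻¹) • (1 - Kmat F n t)) = 1 ∧
      (Rmat F n r s t - (r⁻¹ * s - r * s⁻¹) • (1 - Kmat F n t)) * Rmat F n r s t = 1 := by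
  have hq : r⁻¹ * s = t ^ (2 : ℤ) := by rw [← hts]; norm_cast
  have hq' : r * s⁻¹ = t ^ (-2 : ℤ) := by rw [_root_.zpow_neg, ← hq, mul_inv, inv_inv]
  have h : Rmat F n r s t * (Rmat F n r s t - (r⁻¹ * s - r * s⁻¹) • (1 - Kmat F n t)) = 1 := by
    ext ⟨a, b⟩ ⟨c, d⟩
    rw [Matrix.mul_apply, Matrix.one_apply]
    -- Pairs `(a, a')` form one block of `R`; away from it `K` and the `E_{i,j'} ⊗ E_{i',j}` part of `R`
    -- vanish.
    by_cases hb : b = a.rev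
    · subst hb
      by_cases hd : d = c.rev
      · subst hd
        rw [antidiag_block ht hq hq']
        refine if_congr ⟨fun h => by rw [h], fun h => (Prod.mk.inj h).1⟩ rfl rfl
      · have h0 : ∀ e : Fin (2 * n + 1), (Rmat F n r s t -
            (r⁻¹ * s - r * s⁻¹) • (1 - Kmat F n t)) (e, e.rev) (c, d) = 0 := by
          intro e
          rw [candidate_apply, if_neg, if_neg, if_neg]
          · ring
          · exact fun h => hd h.2.1
          · exact fun h => hd (by rw [h.1, h.2.1])
          · exact fun h => hd (by rw [h.1, h.2, Fin.rev_rev])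
        have h0' := h0 a.rev
        rw [Fin.rev_rev] at h0'
        rw [Rmat_row_sum, if_neg (c := (a, a.rev) = (c, d))]
        · simp only [h0, h0']
          simp
        · intro h
          rw [Prod.mk.injEq] at h
          exact hd (by rw [← h.1, ← h.2])
    · have hb' : ¬ a = b.rev := fun h => hb (by rw [h, Fin.rev_rev])
      rw [Rmat_row_sum, candidate_apply, candidate_apply]
      simp only [hb, hb', false_and, if_false, Prod.mk.injEq]
      by_cases hab : a = b
      · subst hab
        have ha : (a : ℕ) ≠ n := fun h => hb (by rw [Fin.ext_iff, Fin.val_rev]; omega)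
        rw [flipWt_self ha]
        by_cases hc : c = a ∧ d = a
        · simp [hc]
          field_simp
        · have hc' : ¬ (a = c ∧ a = d) := fun h => hc ⟨h.1.symm, h.2.symm⟩
          have hc'' : ¬ (c = a ∧ d = a ∧ True) := fun h => hc ⟨h.1, h.2.1⟩
          simp [hc, hc']
      · have hw := flipWt_mul_swap hr hs hab hb
        rcases lt_or_gt_of_ne hab with hlt | hlt
        · by_cases h1 : c = a ∧ d = b
          · have h2 : ¬ (c = b ∧ d = a) := fun h => hab (h1.1.symm.trans h.1)
            simp [h1, hab, not_lt.mpr hlt.le, not_le.mpr hlt, hw]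
          · have h1' : ¬ (a = c ∧ b = d) := fun h => h1 ⟨h.1.symm, h.2.symm⟩
            simp [h1, h1', not_lt.mpr hlt.le, not_le.mpr hlt]
        · by_cases h1 : c = a ∧ d = b
          · have h2 : ¬ (c = b ∧ d = a) := fun h => hab (h1.1.symm.trans h.1)
            simp [h1, hlt, hab, hlt.le, not_le.mpr hlt, hw]
          · have h1' : ¬ (a = c ∧ b = d) := fun h => h1 ⟨h.1.symm, h.2.symm⟩
            by_cases h2 : c = b ∧ d = a
            · simp [h2, hab, Ne.symm hab, hlt, hlt.le, not_le.mpr hlt]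
              ring
            · simp [h1, h1', h2, hlt, hlt.le, not_le.mpr hlt]
  exact ⟨h, mul_eq_one_comm.mp h⟩
end

section
/- For every i ∈ {1,…,N}, the diagonal entries of R satisfy Σ_{j=1}^{N} R[(i,j),(i,j)]·t^{2 m_j} = t^{4n}, where R[(i,j),(i,j)] denotes the ((i,j),(i,j)) entry of R, i.e. the coefficient of E_{ii}⊗E_{jj} in R. (Second identity of Corollary 3.15: Σ_j R_{ij}^{ij}(r⁻¹s)^{2ρ_j} = (r⁻¹s)^{2n}.) -/
/-!
Only three kinds of terms of `R` touch the diagonal. With `q = t² = r⁻¹s`, `a = i + 1` and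
`b = j + 1`, the entry `R[(a,b),(a,b)]` is the sum of `q` (or `1` when `a = n + 1`) if `a = b`,
of `q - q⁻¹` if `b < a`, and of `-(q - q⁻¹) t^{2 m_a}` if `b = a'` and `a > n + 1`
(`Rmat_diag`); every other term is a sum of `E_{xy} ⊗ E_{yx}` with `x ≠ y`.

Weighting by `t^{2 m_b}` and summing over `b`, the middle contribution telescopes, because
`(t² - t⁻²) t^{2 m_b}` is a difference of two consecutive powers of `t⁴` (`sum_weight_low`,
`sum_weight_high`). The central index `b = n + 1` breaks the telescope by `t² - t⁻²`, and exactly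
this is compensated by the term at `b = a'`, whose weight is `t^{2 m_{a'}} = t^{-2 m_a}`. What is
left is `t^{4n}` in each of the cases `a ≤ n`, `a = n + 1` and `a > n + 1`.
-/

open Matrix Finset
open scoped Kronecker

/-- A diagonal entry of `E_{ab} ⊗ E_{cd}`, with zero-based positions `i`, `j`. -/
lemma kron_diag (F : Type*) [Field F] (n a b c d : ℕ) (i j : Fin (2 * n + 1)) :
    (Eunit F n a b ⊗ₖ Eunit F n c d) (i, j) (i, j)
      = if ((i : ℕ) + 1 = a ∧ (i : ℕ) + 1 = b) ∧ ((j : ℕ) + 1 = c ∧ (j : ℕ) + 1 = d)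
        then 1 else 0 := by
  simp only [kroneckerMap_apply, Eunit, Matrix.of_apply, mul_ite, mul_one, mul_zero]
  split_ifs <;> first | rfl | (exfalso; tauto)

lemma kron_diag_of_ne (F : Type*) [Field F] (n a b c d : ℕ) (i j : Fin (2 * n + 1))
    (h : a ≠ b) : (Eunit F n a b ⊗ₖ Eunit F n c d) (i, j) (i, j) = 0 := by
  rw [kron_diag, if_neg]
  rintro ⟨⟨h1, h2⟩, -⟩
  exact h (h1.symm.trans h2)

lemma sum_kron_diag_up (F : Type*) [Field F] (n : ℕ) (i j : Fin (2 * n + 1))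
    (S : Finset ℕ) (T : ℕ → Finset ℕ) (h : ∀ x ∈ S, ∀ y ∈ T x, x < y) :
    ∑ x ∈ S, ∑ y ∈ T x, (Eunit F n x y ⊗ₖ Eunit F n y x) (i, j) (i, j) = 0 :=
  sum_eq_zero fun x hx => sum_eq_zero fun y hy =>
    kron_diag_of_ne F n _ _ _ _ i j (h x hx y hy).ne

lemma sum_kron_diag_down (F : Type*) [Field F] (n : ℕ) (i j : Fin (2 * n + 1))
    (S : Finset ℕ) (T : ℕ → Finset ℕ) (h : ∀ x ∈ S, ∀ y ∈ T x, x < y) :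
    ∑ x ∈ S, ∑ y ∈ T x, (Eunit F n y x ⊗ₖ Eunit F n x y) (i, j) (i, j) = 0 :=
  sum_eq_zero fun x hx => sum_eq_zero fun y hy =>
    kron_diag_of_ne F n _ _ _ _ i j (h x hx y hy).ne'

lemma mwt_pr (n a : ℕ) (h1 : 1 ≤ a) (h2 : a ≤ 2 * n + 1) : mwt n (pr n a) = -mwt n a := by
  unfold mwt pr
  split_ifs <;> omega

/-- The diagonal entries of `R`, at zero-based positions `i`, `j`: there the central index is `n`
and the position opposite to `i` is `2n - i`. -/
lemma Rmat_diag (F : Type*) [Field F] (n : ℕ) (r s t : F) (i j : Fin (2 * n + 1)) :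
    Rmat F n r s t (i, j) (i, j)
      = (if (j : ℕ) = i then (if (i : ℕ) = n then 1 else r⁻¹ * s) else 0)
        + (r⁻¹ * s - r * s⁻¹) * ((if (j : ℕ) < i then 1 else 0)
          - (if (j : ℕ) = 2 * n - i then
              (if n < (i : ℕ) then t ^ (2 * mwt n ((i : ℕ) + 1)) else 0) else 0)) := by
  have hi := i.isLt
  have hj := j.isLt
  have hlow : ∀ x ∈ Icc 1 n, ∀ y ∈ Icc (x + 1) n, x < y := by
    intro x hx y hy; simp only [mem_Icc] at hx hy; omega
  have hhigh : ∀ x ∈ Icc (pr n n) (pr n 2), ∀ y ∈ Icc (x + 1) (pr n 1), x < y := by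
    intro x hx y hy; simp only [mem_Icc] at hx hy; omega
  have hmix : ∀ x ∈ Icc 2 n, ∀ y ∈ Icc (pr n (x - 1)) (pr n 1), x < y := by
    intro x hx y hy; simp only [mem_Icc, pr] at hx hy; omega
  have hmix' : ∀ x ∈ Icc 1 (n - 1), ∀ y ∈ Icc (pr n n) (pr n (x + 1)), x < y := by
    intro x hx y hy; simp only [mem_Icc, pr] at hx hy; omega
  have hcenter : ∑ x ∈ (Icc 1 (2 * n + 1)).erase (n + 1),
      (Eunit F n x (n + 1) ⊗ₖ Eunit F n (n + 1) x) (i, j) (i, j) = 0 :=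
    sum_eq_zero fun x hx => kron_diag_of_ne F n _ _ _ _ i j (ne_of_mem_erase hx)
  have hcenter' : ∑ x ∈ (Icc 1 (2 * n + 1)).erase (n + 1),
      (Eunit F n (n + 1) x ⊗ₖ Eunit F n x (n + 1)) (i, j) (i, j) = 0 :=
    sum_eq_zero fun x hx => kron_diag_of_ne F n _ _ _ _ i j (ne_of_mem_erase hx).symm
  have hanti : ∑ x ∈ (Icc 1 (2 * n + 1)).erase (n + 1),
      (Eunit F n (pr n x) x ⊗ₖ Eunit F n x (pr n x)) (i, j) (i, j) = 0 := by
    refine sum_eq_zero fun x hx => kron_diag_of_ne F n _ _ _ _ i j ?_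
    simp only [mem_erase, mem_Icc, pr] at hx ⊢
    omega
  have hdiag : ∑ x ∈ (Icc 1 (2 * n + 1)).erase (n + 1),
      (Eunit F n x x ⊗ₖ Eunit F n x x) (i, j) (i, j)
        = if (j : ℕ) = i ∧ (i : ℕ) ≠ n then 1 else 0 := by
    rw [Finset.sum_congr rfl (g := fun x => if x = (i : ℕ) + 1 then
      (if (j : ℕ) = i then (1 : F) else 0) else 0), sum_ite_eq']
    · simp only [mem_erase, mem_Icc]
      split_ifs <;> first | rfl | omega
    · intro x _
      rw [kron_diag]
      split_ifs <;> first | rfl | omega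
  have hlower : ∑ x ∈ Icc 1 (2 * n + 1), ∑ y ∈ Icc 1 (x - 1),
      (Eunit F n x x ⊗ₖ Eunit F n y y) (i, j) (i, j) = if (j : ℕ) < i then 1 else 0 := by
    have h : ∀ x ∈ Icc 1 (2 * n + 1), ∑ y ∈ Icc 1 (x - 1),
        (Eunit F n x x ⊗ₖ Eunit F n y y) (i, j) (i, j)
          = if x = (i : ℕ) + 1 then (if (j : ℕ) < i then (1 : F) else 0) else 0 := by
      intro x _
      rw [Finset.sum_congr rfl (g := fun y => if y = (j : ℕ) + 1 then
        (if x = (i : ℕ) + 1 then (1 : F) else 0) else 0), sum_ite_eq']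
      · simp only [mem_Icc]
        split_ifs <;> first | rfl | omega
      · intro y _
        rw [kron_diag]
        split_ifs <;> first | rfl | omega
    rw [sum_congr rfl h, sum_ite_eq', if_pos (by simp only [mem_Icc]; omega)]
  have hK : ∑ x ∈ Icc 1 (2 * n + 1), ∑ y ∈ Icc 1 (x - 1),
      t ^ (mwt n x - mwt n y) * (Eunit F n x (pr n y) ⊗ₖ Eunit F n (pr n x) y) (i, j) (i, j)
        = if (j : ℕ) = 2 * n - i then
            (if n < (i : ℕ) then t ^ (2 * mwt n ((i : ℕ) + 1)) else 0) else 0 := by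
    have h : ∀ x ∈ Icc 1 (2 * n + 1), ∑ y ∈ Icc 1 (x - 1),
        t ^ (mwt n x - mwt n y) * (Eunit F n x (pr n y) ⊗ₖ Eunit F n (pr n x) y) (i, j) (i, j)
          = if x = (i : ℕ) + 1 then (if (j : ℕ) = 2 * n - i then
            (if n < (i : ℕ) then t ^ (2 * mwt n ((i : ℕ) + 1)) else 0) else 0) else 0 := by
      intro x hx
      rw [mem_Icc] at hx
      rw [Finset.sum_congr rfl (g := fun y => if y = pr n x then
        (if x = (i : ℕ) + 1 then (if (j : ℕ) = 2 * n - i then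
          t ^ (2 * mwt n ((i : ℕ) + 1)) else 0) else 0) else 0), sum_ite_eq']
      · simp only [mem_Icc, pr]
        split_ifs <;> first | rfl | omega
      · intro y hy
        rw [mem_Icc] at hy
        rw [kron_diag]
        by_cases hc : y = pr n x ∧ x = (i : ℕ) + 1 ∧ (j : ℕ) = 2 * n - i
        · obtain ⟨h1, h2, h3⟩ := hc
          rw [if_pos (by unfold pr at *; omega), if_pos h1, if_pos h2, if_pos h3, h1,
            mwt_pr n x hx.1 hx.2, mul_one, sub_neg_eq_add, two_mul, h2]
        · rw [if_neg (by unfold pr at *; omega)]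
          split_ifs <;> first | exact mul_zero _ | (exfalso; tauto)
    rw [sum_congr rfl h, sum_ite_eq', if_pos (by simp only [mem_Icc]; omega)]
  simp only [Rmat, Matrix.add_apply, Matrix.smul_apply, Matrix.sub_apply, Matrix.sum_apply,
    smul_eq_mul]
  rw [sum_kron_diag_up F n i j _ _ hlow, sum_kron_diag_up F n i j _ _ hmix,
    sum_kron_diag_up F n i j _ _ hhigh, sum_kron_diag_up F n i j _ _ hmix',
    sum_kron_diag_down F n i j _ _ hlow, sum_kron_diag_down F n i j _ _ hmix,
    sum_kron_diag_down F n i j _ _ hhigh, sum_kron_diag_down F n i j _ _ hmix',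
    hcenter, hcenter', hanti, hdiag, hlower, hK, kron_diag]
  have hcase : r⁻¹ * s * (if (j : ℕ) = i ∧ (i : ℕ) ≠ n then (1 : F) else 0)
      + (if ((i : ℕ) + 1 = n + 1 ∧ (i : ℕ) + 1 = n + 1) ∧
          ((j : ℕ) + 1 = n + 1 ∧ (j : ℕ) + 1 = n + 1) then (1 : F) else 0)
      = if (j : ℕ) = i then (if (i : ℕ) = n then 1 else r⁻¹ * s) else 0 := by
    split_ifs <;> first | omega | simp
  rw [← hcase]
  ring

/-- The weights of the first `k` indices telescope as long as the central index is not among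
them. -/
lemma sum_weight_low {F : Type*} [Field F] (n : ℕ) (t : F) (ht : t ≠ 0) (k : ℕ) (hk : k ≤ n) :
    (t ^ (2 : ℤ) - t ^ (-2 : ℤ)) * ∑ b ∈ range k, t ^ (2 * mwt n (b + 1))
      = t ^ (4 * n : ℤ) - t ^ (4 * n - 4 * k : ℤ) := by
  induction k with
  | zero => simp
  | succ k ih =>
    have hm : mwt n (k + 1) = 2 * n - 1 - 2 * k := by
      unfold mwt
      rw [if_pos hk]; push_cast; ring
    rw [sum_range_succ, mul_add, ih (by omega), sub_mul, ← zpow_add₀ ht, ← zpow_add₀ ht, hm]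
    push_cast
    ring_nf

/-- Once the first `k` indices include the central one, its weight `1` contributes the extra
`t² - t⁻²`. -/
lemma sum_weight_high {F : Type*} [Field F] (n : ℕ) (t : F) (ht : t ≠ 0) (k : ℕ)
    (hk : n + 1 ≤ k) :
    (t ^ (2 : ℤ) - t ^ (-2 : ℤ)) * ∑ b ∈ range k, t ^ (2 * mwt n (b + 1))
      = t ^ (4 * n : ℤ) + (t ^ (2 : ℤ) - t ^ (-2 : ℤ)) - t ^ (4 * n + 4 - 4 * k : ℤ) := by
  induction k, hk using Nat.le_induction with
  | base =>
    have hm : mwt n (n + 1) = 0 := by simp [mwt]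
    rw [sum_range_succ, mul_add, sum_weight_low n t ht n le_rfl, hm]
    push_cast
    ring_nf
    simp only [zpow_zero, one_mul]
  | succ k hk ih =>
    have hm : mwt n (k + 1) = 2 * n + 1 - 2 * k := by
      unfold mwt
      rw [if_neg (by omega), if_neg (by omega)]; push_cast; ring
    rw [sum_range_succ, mul_add, ih, sub_mul, ← zpow_add₀ ht, ← zpow_add₀ ht, hm]
    push_cast
    ring_nf

/-- **Corollary 3.15** (second identity): for every row index `i`,
`Σ_{j=1}^{N} R_{ij}^{ij} t^{2 m_j} = t^{4n}`, i.e.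
`Σ_j R[(i,j),(i,j)] (r⁻¹s)^{ρ_j·2} = (r⁻¹s)^{2n}`. -/
theorem corollary_3_15_diag (n : ℕ) (hn : 1 ≤ n)
    (F : Type*) [Field F] (r s t : F)
    (hr : r ≠ 0) (hs : s ≠ 0) (ht : t ≠ 0) (hts : t ^ 2 = r⁻¹ * s) :
    ∀ i : Fin (2 * n + 1),
      ∑ j : Fin (2 * n + 1),
          Rmat F n r s t (i, j) (i, j) * t ^ (2 * mwt n ((j : ℕ) + 1))
        = t ^ (4 * n) := by
  intro i
  have hi := i.isLt
  have hq : r⁻¹ * s = t ^ (2 : ℤ) := by rw [← hts]; norm_cast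
  have hq' : r * s⁻¹ = t ^ (-2 : ℤ) := by
    rw [_root_.zpow_neg, ← hq, mul_inv, inv_inv]
  have hsum : ∑ j : Fin (2 * n + 1), Rmat F n r s t (i, j) (i, j) * t ^ (2 * mwt n ((j : ℕ) + 1))
      = (if (i : ℕ) = n then 1 else t ^ (2 : ℤ)) * t ^ (2 * mwt n ((i : ℕ) + 1))
        + ((t ^ (2 : ℤ) - t ^ (-2 : ℤ)) * ∑ b ∈ range i, t ^ (2 * mwt n (b + 1))
        - (t ^ (2 : ℤ) - t ^ (-2 : ℤ)) *
          ((if n < (i : ℕ) then t ^ (2 * mwt n ((i : ℕ) + 1)) else 0)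
            * t ^ (2 * mwt n (2 * n - i + 1)))) := by
    simp only [Rmat_diag, hq, hq']
    rw [Fin.sum_univ_eq_sum_range (fun j : ℕ =>
      ((if j = i then (if (i : ℕ) = n then 1 else t ^ (2 : ℤ)) else 0)
        + (t ^ (2 : ℤ) - t ^ (-2 : ℤ)) * ((if j < i then 1 else 0)
          - (if j = 2 * n - i then
              (if n < (i : ℕ) then t ^ (2 * mwt n ((i : ℕ) + 1)) else 0) else 0)))
        * t ^ (2 * mwt n (j + 1)))]
    simp only [add_mul, mul_assoc, sub_mul, sum_add_distrib, ← mul_sum, sum_sub_distrib]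
    simp only [ite_mul, zero_mul, one_mul, sum_ite_eq', mem_range]
    rw [if_pos hi, if_pos (by omega : 2 * n - (i : ℕ) < 2 * n + 1), ← sum_filter]
    have hf : (range (2 * n + 1)).filter (fun b => b < (i : ℕ)) = range i := by
      ext b
      simp only [mem_filter, mem_range]
      omega
    rw [hf]
    ring
  rw [hsum, ← zpow_natCast]
  rcases lt_trichotomy (i : ℕ) n with h | h | h
  · have hm : mwt n ((i : ℕ) + 1) = 2 * n - 1 - 2 * (i : ℕ) := by
      unfold mwt
      rw [if_pos (by omega)]; push_cast; ring
    rw [sum_weight_low n t ht i h.le, if_neg h.ne, if_neg h.not_gt, ← zpow_add₀ ht, hm]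
    push_cast
    ring_nf
  · have hm : mwt n ((i : ℕ) + 1) = 0 := by simp [mwt, h]
    rw [sum_weight_low n t ht i h.le, if_pos h, if_neg h.not_gt, hm, h]
    push_cast
    ring_nf
  · have hm : mwt n ((i : ℕ) + 1) = 2 * n + 1 - 2 * (i : ℕ) := by
      unfold mwt
      rw [if_neg (by omega), if_neg (by omega)]; push_cast; ring
    have hp : 2 * n - (i : ℕ) + 1 = pr n (i + 1) := by unfold pr; omega
    rw [sum_weight_high n t ht i h, if_neg h.ne', if_pos h, hp,
      mwt_pr n _ (by omega) (by omega), ← zpow_add₀ ht, ← zpow_add₀ ht, hm]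
    push_cast
    ring_nf
    simp
end

section
/- Define the flip P := Σ_{i,j=1}^{N} E_{ij} ⊗ E_{ji}, set R̂ := P·R, and define the quantum metric matrix C ∈ M_N(F) by C_{ij} := t^{m_i} if j = i' and C_{ij} := 0 otherwise. Then R̂ and its first partial transpose R̂^{t₁} are invertible, and the crossing symmetry relations hold: R̂ = C₁·(R̂^{t₁})⁻¹·C₁⁻¹ and R̂ = C₂·(R̂⁻¹)^{t₂}·C₂⁻¹, where C₁ := C ⊗ I_N, C₂ := I_N ⊗ C, and the partial transposes are defined entrywise by (M^{t₁})[(a,b),(c,d)] := M[(c,b),(a,d)] and (M^{t₂})[(a,b),(c,d)] := M[(a,d),(c,b)]. (Proposition 3.18.) -/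
/-!
Write `R̂ = P R`, `λ = t² - t⁻²`, `τ_a = t^{m_a}` and `a'` for the reversed index. Reading off
entries (`Rmat_apply`) shows that `R̂` is the matrix `Hmat`,

`R̂ = Σ w(a,b) E_{aa} ⊗ E_{bb} + λ (Σ_{a<b} E_{ab} ⊗ E_{ba} - Σ_{a<c} τ_c τ_a⁻¹ E_{ac} ⊗ E_{a'c'})`,

with weights satisfying `w(a',b) = w(a,b') = w(a,b)⁻¹`, and `w(b,a) = w(a,b)⁻¹` unless `b = a` or
`b = a'`.

The metric `C` squares to the identity because `τ_{a'} = τ_a⁻¹`. The crossing relations therefore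
say that `(R̂^{t₁})⁻¹ = C₁ R̂ C₁` and `(R̂⁻¹)^{t₂} = C₂ R̂ C₂`. The right-hand sides have explicit
entries: `C₁ R̂ C₁` is `Xmat`, and `C₂ R̂ C₂` is the second partial transpose of `Ymat`, the matrix
obtained from `Hmat` by inverting `w` and `τ` and changing the sign of `λ`. What has to be shown is
that `Ymat` is inverse to `R̂` and `Xmat` to `R̂^{t₁}` (`Ymat_mul_Hmat`, `Xmat_mul`).

Both products split into blocks. In the first, a row `(a,b)` with `b ≠ a'` meets only the columns
`(a,b)` and `(b,a)`; in the second, a row with `b ≠ a` meets only `(a,b)` and `(b',a')`. These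
blocks of size at most two are handled by the symmetries of `w`. The remaining block, on the pairs
`(a,a')` respectively `(a,a)`, is the same `N × N` computation in both cases: the triangular matrices
`Hb` and `Yb` are mutually inverse (`Hb_mul_Yb`). This comes from the telescoping evaluation of
`λ Σ_{a<k<c} τ_k²` (`tele`), which rests on `τ_k² ω_k⁻¹ = τ_{k+1}² ω_{k+1}`, where `ω_k = w(k,k)` is
`1` at the middle index and `t²` elsewhere.
-/

open Matrix Finset
open scoped Kronecker

/-- The flip matrix `P = Σ_{i,j} E_{ij} ⊗ E_{ji}`. -/
def Pmat (F : Type*) [Field F] (n : ℕ) :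
    Matrix (Fin (2 * n + 1) × Fin (2 * n + 1)) (Fin (2 * n + 1) × Fin (2 * n + 1)) F :=
  ∑ i ∈ Icc 1 (2 * n + 1), ∑ j ∈ Icc 1 (2 * n + 1), Eunit F n i j ⊗ₖ Eunit F n j i

/-- The quantum metric matrix `C`, with `C_{ij} = t^{m_i}` if `j = i'` and `0` otherwise. -/
noncomputable def Cmet (F : Type*) [Field F] (n : ℕ) (t : F) :
    Matrix (Fin (2 * n + 1)) (Fin (2 * n + 1)) F :=
  Matrix.of fun i j =>
    if (j : ℕ) + 1 = pr n ((i : ℕ) + 1) then t ^ (mwt n ((i : ℕ) + 1)) else 0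

/-- Partial transpose in the first tensor factor: `(M^{t₁})[(a,b),(c,d)] = M[(c,b),(a,d)]`. -/
def ptrans₁ {α β : Type*} {F : Type*} [Field F] (M : Matrix (α × β) (α × β) F) :
    Matrix (α × β) (α × β) F :=
  Matrix.of fun x y => M (y.1, x.2) (x.1, y.2)

/-- Partial transpose in the second tensor factor: `(M^{t₂})[(a,b),(c,d)] = M[(a,d),(c,b)]`. -/
def ptrans₂ {α β : Type*} {F : Type*} [Field F] (M : Matrix (α × β) (α × β) F) :
    Matrix (α × β) (α × β) F :=
  Matrix.of fun x y => M (x.1, y.2) (y.1, x.2)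

/-! ### Weights, and the block of antipodal pairs -/

section Crossing

variable {F : Type*} [Field F]

lemma rev_val (n : ℕ) (a : Fin (2 * n + 1)) : (a.rev : ℕ) = 2 * n - a := by
  rw [Fin.val_rev]; omega

/-- The weight `t^{m_a}` for a 0-based index `a`, so that `C` has entries `τ_a` at `(a, a')`. For
0-based indices the prime `a'` is `Fin.rev a`. -/
def tau (n : ℕ) (t : F) (a : Fin (2 * n + 1)) : F := t ^ mwt n ((a : ℕ) + 1)

/-- The diagonal weight `ω_k` of `R̂` at `(k, k)`: it is `1` at the middle index and `t²` elsewhere. -/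
def om (n : ℕ) (t : F) (k : ℕ) : F := if k = n then 1 else t ^ 2

/-- The Hecke-type coefficient `λ = t² - t⁻²`, equal to `r⁻¹s - rs⁻¹` when `t² = r⁻¹s`. -/
def lam (t : F) : F := t ^ 2 - (t ^ 2)⁻¹

/-- The pairs `(a, b)` of 0-based indices, neither equal to the middle index `n`, at which the
(generic) weight of `R̂` is `(rs)⁻¹`. Exactly one of `(a, b)` and `(b, a)` is such a pair when
`a ≠ b` and `a + b ≠ 2n`. -/
def below (n a b : ℕ) : Prop :=
  (b < a ∧ a < n) ∨ (b < n ∧ n < a ∧ 2 * n < a + b) ∨ (a < n ∧ n < b ∧ a + b < 2 * n) ∨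
    (n < a ∧ a < b)

instance (n a b : ℕ) : Decidable (below n a b) := by unfold below; infer_instance

/-- The diagonal entry `w(a, b)` of `R̂` at `(a, b)`, without its `λ`-part. -/
def wgt (n : ℕ) (r s t : F) (a b : Fin (2 * n + 1)) : F :=
  if (a : ℕ) = n ∨ (b : ℕ) = n then 1
  else if (a : ℕ) = b then t ^ 2
  else if (a : ℕ) + b = 2 * n then (t ^ 2)⁻¹
  else if below n a b then (r * s)⁻¹
  else r * s

/-- Closed form of `R̂`: weights `w` on the diagonal, plus `λ` times the difference of the flip
restricted to rows `(a, b)` with `a < b` and the strictly triangular part of the rank one matrix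
that couples the antipodal pairs `(a, a')`. -/
def Hmat (n : ℕ) (r s t : F) :
    Matrix (Fin (2 * n + 1) × Fin (2 * n + 1)) (Fin (2 * n + 1) × Fin (2 * n + 1)) F :=
  Matrix.of fun x y =>
    (if y.1 = x.1 ∧ y.2 = x.2 then wgt n r s t x.1 x.2 else 0)
    + lam t * ((if y.1 = x.2 ∧ y.2 = x.1 ∧ x.1 < x.2 then 1 else 0)
    - (if x.2 = x.1.rev ∧ y.2 = y.1.rev ∧ x.1 < y.1 then
        tau n t y.1 * (tau n t x.1)⁻¹ else 0))

lemma tau_ne {n : ℕ} {t : F} (ht : t ≠ 0) (a : Fin (2 * n + 1)) : tau n t a ≠ 0 :=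
  zpow_ne_zero _ ht

lemma tau_rev {n : ℕ} {t : F} (a : Fin (2 * n + 1)) :
    tau n t a.rev = (tau n t a)⁻¹ := by
  unfold tau
  rw [← _root_.zpow_neg, rev_val]
  congr 1
  have := a.isLt
  unfold mwt
  split_ifs <;> omega

lemma om_ne {n : ℕ} {t : F} (ht : t ≠ 0) (k : ℕ) : om n t k ≠ 0 := by
  unfold om; split_ifs <;> simp [ht]

/-- The identity that makes the sums telescope: `τ_k² ω_k⁻¹ = τ_{k+1}² ω_{k+1}`. -/
lemma tele_step {n : ℕ} {t : F} (ht : t ≠ 0) (k : ℕ) :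
    (t ^ mwt n (k + 1)) ^ 2 * (om n t k)⁻¹ = (t ^ mwt n (k + 2)) ^ 2 * om n t (k + 1) := by
  rcases lt_trichotomy (k + 1) n with h | h | h
  · have e : mwt n (k + 1) = mwt n (k + 2) + 2 := by
      unfold mwt; push_cast; split_ifs <;> omega
    rw [e, zpow_add₀ ht]
    simp only [om, if_neg (show k ≠ n by omega), if_neg (show k + 1 ≠ n by omega)]
    norm_cast; field_simp
  · have e : mwt n (k + 1) = 1 := by unfold mwt; split_ifs <;> omega
    have e' : mwt n (k + 2) = 0 := by unfold mwt; split_ifs <;> omega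
    rw [e, e']; simp [om, h, show k ≠ n by omega, ht]
  · rcases eq_or_ne k n with h | h
    · have e : mwt n (k + 1) = 0 := by unfold mwt; split_ifs <;> omega
      have e' : mwt n (k + 2) = -1 := by unfold mwt; push_cast; split_ifs <;> omega
      rw [e, e']; simp [om, h, ht]
    · have e : mwt n (k + 1) = mwt n (k + 2) + 2 := by
        unfold mwt; push_cast; split_ifs <;> omega
      rw [e, zpow_add₀ ht]
      simp only [om, if_neg (show k ≠ n by omega), if_neg (show k + 1 ≠ n by omega)]
      norm_cast; field_simp

/-- Telescoped form of `λ Σ τ_k²` over `a < k < c`. The middle index has `ω = 1` rather than `t²`,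
so it contributes an extra `λ` when it lies strictly between `a` and `c`. -/
lemma tele_nat {n : ℕ} {t : F} (ht : t ≠ 0) (a c : ℕ) (h : a + 1 ≤ c) :
    lam t * ∑ k ∈ Ioo a c, (t ^ mwt n (k + 1)) ^ 2
      = (t ^ mwt n (a + 1)) ^ 2 * (om n t a)⁻¹ - (t ^ mwt n (c + 1)) ^ 2 * om n t c
        + lam t * (if a < n ∧ n < c then 1 else 0) := by
  induction c, h using Nat.le_induction with
  | base =>
    rw [tele_step ht a]
    have : Ioo a (a + 1) = ∅ := by ext; simp
    simp [this]
  | succ c hc ih =>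
    have e : Ioo a (c + 1) = insert c (Ioo a c) := by ext; simp; omega
    rw [e, sum_insert (by simp), mul_add, ih, ← tele_step ht c]
    by_cases hcn : c = n
    · have e0 : mwt n (c + 1) = 0 := by unfold mwt; split_ifs <;> omega
      subst hcn
      simp [e0, om, show a < c by omega]
      ring
    · have e1 : (a < n ∧ n < c + 1) ↔ (a < n ∧ n < c) := by omega
      simp only [e1, om, hcn, lam, if_false]
      ring

lemma tele {n : ℕ} {t : F} (ht : t ≠ 0) (a c : Fin (2 * n + 1)) (h : a < c) :
    lam t * ∑ k : Fin (2 * n + 1), (if a < k ∧ k < c then (tau n t k) ^ 2 else 0)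
      = (tau n t a) ^ 2 * (om n t a)⁻¹ - (tau n t c) ^ 2 * om n t c
        + lam t * (if (a : ℕ) < n ∧ n < (c : ℕ) then 1 else 0) := by
  unfold tau
  rw [← tele_nat ht a c h]
  simp only [Fin.lt_def]
  rw [Fin.sum_univ_eq_sum_range
    (fun k => if (a : ℕ) < k ∧ k < (c : ℕ) then (t ^ mwt n (k + 1)) ^ 2 else 0), ← sum_filter]
  congr 2
  ext k
  have := c.isLt
  simp; omega

/-- The block of `R̂` on the antipodal pairs `(a, a')`, indexed by `a`. It is upper triangular. -/
def Hb (n : ℕ) (t : F) : Matrix (Fin (2 * n + 1)) (Fin (2 * n + 1)) F :=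
  Matrix.of fun a c => (if c = a then (om n t a)⁻¹ else 0)
    + lam t * ((if c = a.rev ∧ a < c then 1 else 0)
      - (if a < c then tau n t c * (tau n t a)⁻¹ else 0))

/-- The inverse of the block `Hb`. After reversal of indices and rescaling by `τ`, it is also the
block of `R̂^{t₁}` on the diagonal pairs `(a, a)`. -/
def Yb (n : ℕ) (t : F) : Matrix (Fin (2 * n + 1)) (Fin (2 * n + 1)) F :=
  Matrix.of fun a c => (if c = a then om n t a else 0)
    - lam t * ((if c = a.rev ∧ a < c then 1 else 0)
      - (if a < c then tau n t a * (tau n t c)⁻¹ else 0))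

/-- An off-diagonal entry `(a, c)` of the product is `λ` times a combination of a telescoping sum of
`τ_k²` over `a < k < c`, the two boundary terms `k = a, c`, and the terms `k = a'` and `k = c'`.
The last two account for the extra `λ` coming from the middle index. -/
lemma Hb_mul_Yb {n : ℕ} {t : F} (ht : t ≠ 0) : Hb n t * Yb n t = 1 := by
  ext a c
  rw [Matrix.mul_apply]
  have hA := tau_ne (n := n) ht
  have hO := om_ne (n := n) ht
  rcases lt_trichotomy a c with h | h | h
  · have key : ∀ k, Hb n t a k * Yb n t k c =
        (if k = a then (om n t a)⁻¹ * Yb n t a c else 0)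
        + (if k = c then Hb n t a c * om n t c else 0)
        + (if k = a.rev then
            (if a < k ∧ k < c then lam t ^ 2 * ((tau n t a)⁻¹ * (tau n t c)⁻¹) else 0) else 0)
        + (if k = c.rev then
            (if a < k ∧ k < c then lam t ^ 2 * ((tau n t a)⁻¹ * (tau n t c)⁻¹) else 0) else 0)
        - lam t * ((tau n t a)⁻¹ * (tau n t c)⁻¹) *
          (lam t * (if a < k ∧ k < c then (tau n t k) ^ 2 else 0)) := by
      intro k
      by_cases hka : k = a
      · subst hka
        simp [Hb, h.ne]
      by_cases hkc : k = c
      · subst hkc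
        simp [Yb, h.ne']
      by_cases hk : a < k ∧ k < c
      · have h1 : (c = k.rev) ↔ (k = c.rev) := by
          rw [eq_comm, Fin.rev_eq_iff]
        have h2 : k = a.rev → k ≠ c.rev := fun e e' => h.ne (Fin.rev_injective (e.symm.trans e'))
        have hck : c ≠ k := Ne.symm hkc
        by_cases h3 : k = a.rev
        · have h4 := h2 h3
          have h5 : tau n t k = (tau n t a)⁻¹ := by rw [h3, tau_rev]
          simp only [Hb, Yb, Matrix.of_apply, h1, hka, hkc, hck, hk.1, hk.2, h4, if_true,
            if_false, and_true, if_pos h3, h5]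
          ring
        · by_cases h4 : k = c.rev
          · have h5 : tau n t k = (tau n t c)⁻¹ := by rw [h4, tau_rev]
            simp only [Hb, Yb, Matrix.of_apply, h1, hka, hkc, hck, hk.1, hk.2, h3, if_true,
              if_false, and_true]
            simp only [← h4, h5, if_true]
            ring
          · simp only [Hb, Yb, Matrix.of_apply, h1, hka, hkc, hck, hk.1, hk.2, h3, h4, if_true,
              if_false, and_true]
            ring
      · rcases not_and_or.mp hk with h' | h'
        · simp [Hb, hka, hkc, h']
        · simp [Yb, Ne.symm hkc, hka, hkc, h']
    simp only [key, sum_sub_distrib, sum_add_distrib, ← mul_sum, sum_ite_eq', mem_univ, if_true]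
    rw [tele ht a c h, Matrix.one_apply_ne h.ne]
    have hac := h.ne'
    simp only [Hb, Yb, Matrix.of_apply, hac, h, if_true, if_false, and_true]
    have hA1 := hA a
    have hA2 := hA c
    have hO1 := hO a
    have hO2 := hO c
    have ha := a.isLt
    have hc := c.isLt
    by_cases hr : c = a.rev
      -- Here `a'` and `c'` are endpoints of the range, while the middle index is inside it.
    · have hv : (c : ℕ) = 2 * n - a := by rw [hr, rev_val]
      have hlt : (a : ℕ) < c := h
      have ho : om n t c = t ^ 2 := by simp [om]; omega
      have ho' : om n t a = t ^ 2 := by simp [om]; omega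
      have ht' : tau n t c = (tau n t a)⁻¹ := by rw [hr, tau_rev]
      have e1 : ¬ (a < a.rev ∧ a.rev < c) := by rw [hr]; simp
      have e2 : ¬ (a < c.rev ∧ c.rev < c) := by rw [hr]; simp
      have e3 : (a : ℕ) < n ∧ n < (c : ℕ) := by omega
      rw [if_pos hr, if_neg e1, if_neg e2, if_pos e3, ho, ho', ht']
      unfold lam
      field_simp
      ring
    · have hv : (c : ℕ) ≠ 2 * n - a := by
        rw [← rev_val]; exact fun e => hr (Fin.ext e)
      have hlt : (a : ℕ) < c := h
      -- At most one of `a'`, `c'` lies strictly between `a` and `c`, and one of them does exactly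
      -- when the middle index does.
      have e : (if a < a.rev ∧ a.rev < c then lam t ^ 2 * ((tau n t a)⁻¹ * (tau n t c)⁻¹) else 0)
        + (if a < c.rev ∧ c.rev < c then lam t ^ 2 * ((tau n t a)⁻¹ * (tau n t c)⁻¹) else 0)
        = (lam t ^ 2 * ((tau n t a)⁻¹ * (tau n t c)⁻¹)) *
          (if (a : ℕ) < n ∧ n < (c : ℕ) then 1 else 0) := by
        simp only [Fin.lt_def, rev_val]
        split_ifs <;> first | omega | simp
      rw [if_neg hr]
      rw [add_assoc (_ + _), e]
      generalize (if (a : ℕ) < n ∧ n < (c : ℕ) then (1 : F) else 0) = z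
      field_simp
      ring
  · subst h
    rw [sum_eq_single a]
    · simp [Hb, Yb, hO]
    · intro k _ hk
      rcases lt_or_gt_of_ne hk with h | h
      · simp [Hb, hk, h.not_gt]
      · simp [Yb, hk.symm, h.not_gt]
    · simp
  · rw [Matrix.one_apply_ne h.ne', sum_eq_zero]
    intro k _
    by_cases hk : k < a
    · simp [Hb, hk.ne, hk.not_gt]
    · have : c < k := lt_of_lt_of_le h (not_lt.mp hk)
      simp [Yb, this.ne, this.not_gt]

end Crossing

/-! ### Inverses of the closed form and of its partial transpose -/

section Crossing2

variable {F : Type*} [Field F]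

lemma om_rev {n : ℕ} {t : F} (a : Fin (2 * n + 1)) : om n t (2 * n - a) = om n t a := by
  have := a.isLt
  unfold om
  congr 1
  simp; omega

lemma wgt_ne {n : ℕ} {r s t : F} (hr : r ≠ 0) (hs : s ≠ 0) (ht : t ≠ 0)
    (a b : Fin (2 * n + 1)) : wgt n r s t a b ≠ 0 := by
  unfold wgt; split_ifs <;> simp [hr, hs, ht]

lemma wgt_self {n : ℕ} {r s t : F} (a : Fin (2 * n + 1)) : wgt n r s t a a = om n t a := by
  unfold wgt om; split_ifs <;> first | rfl | omega

lemma wgt_swap {n : ℕ} {r s t : F}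
    (a b : Fin (2 * n + 1)) (h : a ≠ b) (h' : b ≠ a.rev) :
    wgt n r s t b a = (wgt n r s t a b)⁻¹ := by
  have ha := a.isLt
  have hb := b.isLt
  have h1 : (a : ℕ) ≠ b := fun e => h (Fin.ext e)
  have h2 : (b : ℕ) ≠ 2 * n - a := by rw [← rev_val]; exact fun e => h' (Fin.ext e)
  unfold wgt
  split_ifs <;> first | omega | (simp only [below] at *; omega) | simp

lemma wgt_rev {n : ℕ} {r s t : F} (a b : Fin (2 * n + 1)) :
    wgt n r s t a.rev b = (wgt n r s t a b)⁻¹ := by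
  have ha := a.isLt
  have hb := b.isLt
  unfold wgt
  rw [rev_val]
  split_ifs <;> first | omega | (simp only [below] at *; omega) | simp

lemma wgt_rev_right {n : ℕ} {r s t : F} (a b : Fin (2 * n + 1)) :
    wgt n r s t a b.rev = (wgt n r s t a b)⁻¹ := by
  have ha := a.isLt
  have hb := b.isLt
  unfold wgt
  rw [rev_val]
  split_ifs <;> first | omega | (simp only [below] at *; omega) | simp

/-- The inverse of `R̂`: the weights are inverted, `λ` changes sign, and `τ` becomes `τ⁻¹`. -/
def Ymat (n : ℕ) (r s t : F) :
    Matrix (Fin (2 * n + 1) × Fin (2 * n + 1)) (Fin (2 * n + 1) × Fin (2 * n + 1)) F :=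
  Matrix.of fun x y =>
    (if y.1 = x.1 ∧ y.2 = x.2 then (wgt n r s t x.1 x.2)⁻¹ else 0)
    - lam t * ((if y.1 = x.2 ∧ y.2 = x.1 ∧ x.1 < x.2 then 1 else 0)
    - (if x.2 = x.1.rev ∧ y.2 = y.1.rev ∧ x.1 < y.1 then
        tau n t x.1 * (tau n t y.1)⁻¹ else 0))

lemma Yb_mul_Hb {n : ℕ} {t : F} (ht : t ≠ 0) : Yb n t * Hb n t = 1 :=
  mul_eq_one_comm.mp (Hb_mul_Yb ht)

/-- The rows of `R̂` at antipodal pairs are supported on antipodal columns. -/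
lemma Hmat_anti {n : ℕ} {r s t : F} (k c d : Fin (2 * n + 1)) :
    Hmat n r s t (k, k.rev) (c, d) = if d = c.rev then Hb n t k c else 0 := by
  by_cases hd : d = c.rev
  · subst hd
    have e1 : (c = k ∧ c.rev = k.rev) ↔ c = k := by simp
    have e2 : (c = k.rev ∧ c.rev = k ∧ k < k.rev) ↔ (c = k.rev ∧ k < c) := by
      constructor
      · rintro ⟨rfl, -, h⟩; exact ⟨rfl, h⟩
      · rintro ⟨rfl, h⟩; exact ⟨rfl, by simp, h⟩
    simp [Hmat, Hb, e2, wgt_rev_right, wgt_self]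
  · have e1 : ¬ (c = k ∧ d = k.rev) := by rintro ⟨rfl, rfl⟩; exact hd rfl
    have e2 : ¬ (c = k.rev ∧ d = k ∧ k < k.rev) := by
      rintro ⟨rfl, rfl, -⟩; exact hd (by simp)
    simp [Hmat, hd, e1]
    rintro rfl rfl; exact absurd (by simp) hd

/-- The rows of `R̂⁻¹` at antipodal pairs are supported on antipodal columns. -/
lemma Ymat_anti {n : ℕ} {r s t : F} (k c d : Fin (2 * n + 1)) :
    Ymat n r s t (k, k.rev) (c, d) = if d = c.rev then Yb n t k c else 0 := by
  by_cases hd : d = c.rev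
  · subst hd
    have e1 : (c = k ∧ c.rev = k.rev) ↔ c = k := by simp
    have e2 : (c = k.rev ∧ c.rev = k ∧ k < k.rev) ↔ (c = k.rev ∧ k < c) := by
      constructor
      · rintro ⟨rfl, -, h⟩; exact ⟨rfl, h⟩
      · rintro ⟨rfl, h⟩; exact ⟨rfl, by simp, h⟩
    simp [Ymat, Yb, e2, wgt_rev_right, wgt_self]
  · have e1 : ¬ (c = k ∧ d = k.rev) := by rintro ⟨rfl, rfl⟩; exact hd rfl
    have e2 : ¬ (c = k.rev ∧ d = k ∧ k < k.rev) := by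
      rintro ⟨rfl, rfl, -⟩; exact hd (by simp)
    simp [Ymat, hd, e1]
    rintro rfl rfl; exact absurd (by simp) hd

/-- Entry of a product whose left row is supported on two (possibly equal) columns. -/
lemma mul_apply_two {ι : Type*} [Fintype ι] [DecidableEq ι] {M L : Matrix ι ι F}
    {x p q z : ι} {A B : F}
    (h : ∀ y, M x y = (if y = p then A else 0) + (if y = q then B else 0)) :
    (M * L) x z = A * L p z + B * L q z := by
  simp [Matrix.mul_apply, h, add_mul, sum_add_distrib]

/-- On antipodal rows the product reduces to `Yb * Hb`. Every other row `(a, b)` of the left factor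
has at most the two nonzero entries `(a, b)` and `(b, a)`. -/
lemma Ymat_mul_Hmat {n : ℕ} {r s t : F} (hr : r ≠ 0) (hs : s ≠ 0) (ht : t ≠ 0) :
    Ymat n r s t * Hmat n r s t = 1 := by
  ext ⟨a, b⟩ ⟨c, d⟩
  by_cases hb : b = a.rev
  · subst hb
    rw [Matrix.mul_apply, Fintype.sum_prod_type]
    simp only [Ymat_anti, ite_mul, zero_mul, sum_ite_eq', mem_univ, if_true, Hmat_anti]
    by_cases hd : d = c.rev
    · subst hd
      simp only [if_true]
      rw [← Matrix.mul_apply, Yb_mul_Hb ht]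
      simp [Matrix.one_apply]
    · simp only [hd, if_false, mul_zero, sum_const_zero]
      rw [Matrix.one_apply_ne]
      rintro ⟨rfl, rfl⟩; exact hd rfl
  · have hY : ∀ y, Ymat n r s t (a, b) y = (if y = (a, b) then (wgt n r s t a b)⁻¹ else 0)
        + (if y = (b, a) then -(lam t * (if a < b then 1 else 0)) else 0) := by
      rintro ⟨k, l⟩
      by_cases h4 : k = b ∧ l = a <;> simp [Ymat, hb, h4, sub_eq_add_neg, ← and_assoc]
    rw [mul_apply_two hY]
    have hb' : a ≠ b.rev := fun e => hb (by rw [e, Fin.rev_rev])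
    have hw := wgt_ne (n := n) hr hs ht a b
    by_cases hab : a < b
    · have hba := hab.not_gt
      have hsw := wgt_swap (r := r) (s := s) (t := t) a b hab.ne hb
      simp only [Hmat, Matrix.of_apply, hb, hb', hab, hba, hsw, Matrix.one_apply, Prod.mk.injEq,
        and_true, and_false, false_and, if_true, if_false, @eq_comm _ a c, @eq_comm _ b d]
      by_cases h1 : c = a ∧ d = b
      · have h2 : ¬ (c = b ∧ d = a) := by rintro ⟨rfl, rfl⟩; exact hab.ne h1.1.symm
        simp [h1, hw, hab.ne]
      · by_cases h2 : c = b ∧ d = a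
        · simp [h2, hab.ne, hab.ne']; ring
        · simp [h1, h2]
    · simp only [Hmat, Matrix.of_apply, hb, hab, Matrix.one_apply, Prod.mk.injEq,
        and_false, false_and, if_false, @eq_comm _ a c, @eq_comm _ b d]
      by_cases h1 : c = a ∧ d = b
      · simp [h1, hw]
      · simp [h1]

/-- The inverse of `R̂^{t₁}`. It is the entrywise form of `C₁ R̂ C₁`. -/
def Xmat (n : ℕ) (r s t : F) :
    Matrix (Fin (2 * n + 1) × Fin (2 * n + 1)) (Fin (2 * n + 1) × Fin (2 * n + 1)) F :=
  Matrix.of fun x y =>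
    tau n t x.1 * (tau n t y.1)⁻¹ * Hmat n r s t (x.1.rev, x.2) (y.1.rev, y.2)

lemma Xmat_diag {n : ℕ} {r s t : F} (k c d : Fin (2 * n + 1)) :
    Xmat n r s t (k, k) (c, d)
      = if d = c then tau n t k * (tau n t c)⁻¹ * Hb n t k.rev c.rev else 0 := by
  have := Hmat_anti (r := r) (s := s) (t := t) k.rev c.rev d
  simp only [Fin.rev_rev] at this
  simp [Xmat, this]

/-- The rows of `R̂^{t₁}` at pairs `(k, k)` are supported on columns `(c, c)`. -/
lemma ptrans_diag {n : ℕ} {r s t : F} (ht : t ≠ 0) (k c d : Fin (2 * n + 1)) :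
    ptrans₁ (Hmat n r s t) (k, k) (c, d)
      = if d = c then tau n t k * (tau n t c)⁻¹ * Yb n t k.rev c.rev else 0 := by
  have hk := tau_ne (n := n) ht k
  have hc := tau_ne (n := n) ht c
  by_cases hd : d = c
  · subst hd
    have e1 : (k = d ∧ d = k) ↔ d = k := by
      constructor
      · exact fun h => h.2
      · exact fun h => ⟨h.symm, h⟩
    have e2 : (k = d.rev ∧ d = k.rev ∧ d < k) ↔ (d = k.rev ∧ d < k) := by
      constructor
      · exact fun h => h.2
      · rintro ⟨rfl, h⟩; exact ⟨by simp, rfl, h⟩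
    by_cases h1 : d = k
    · subst h1
      simp [ptrans₁, Hmat, Yb, wgt_self, om_rev, hk]
    · by_cases h2 : d = k.rev
      · subst h2
        have h1' : k ≠ k.rev := Ne.symm h1
        simp [ptrans₁, Hmat, Yb, tau_rev, h1, h1']
        split_ifs <;> field_simp <;> ring
      · have h2' : k ≠ d.rev := fun e => h2 (by rw [e, Fin.rev_rev])
        simp [ptrans₁, Hmat, Yb, tau_rev, h1, h2, h2']
        have h3 : ¬ (d.rev = k ∧ d < k) := fun e => h2' e.1.symm
        rw [if_neg h3]
        split_ifs <;> field_simp <;> ring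
  · have hd' : c ≠ d := Ne.symm hd
    simp [ptrans₁, Hmat, hd]
    rw [if_neg, if_neg]
    · simp
    · rintro ⟨rfl, h, -⟩; exact hd (by rw [h, Fin.rev_rev])
    · rintro ⟨rfl, h⟩; exact hd h

/-- A row `(a, b)` of `R̂^{t₁}` with `a ≠ b` has at most two nonzero entries, at `(a, b)` and at
`(b', a')`. -/
lemma ptrans_off {n : ℕ} {r s t : F} (a b c d : Fin (2 * n + 1)) (h : b ≠ a) :
    ptrans₁ (Hmat n r s t) (a, b) (c, d)
      = (if c = a ∧ d = b then wgt n r s t a b else 0)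
        - lam t * (if c = b.rev ∧ d = a.rev ∧ a.rev < b then tau n t a * tau n t b else 0) := by
  have h' := h.symm
  have e1 : (a = c ∧ d = b) ↔ (c = a ∧ d = b) := by rw [@eq_comm _ a c]
  have e2 : (b = c.rev ∧ d = a.rev ∧ c < a) ↔ (c = b.rev ∧ d = a.rev ∧ a.rev < b) := by
    constructor
    · rintro ⟨rfl, rfl, h⟩; simpa using h
    · rintro ⟨rfl, rfl, h⟩
      refine ⟨by simp, rfl, ?_⟩
      rwa [← Fin.rev_lt_rev, Fin.rev_rev]
  simp only [ptrans₁, Hmat, Matrix.of_apply, h', false_and, if_false, e1, e2]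
  by_cases h1 : c = a ∧ d = b
  · rcases h1 with ⟨rfl, rfl⟩
    by_cases h2 : c = d.rev <;> simp [h2]
  · by_cases h2 : c = b.rev
    · subst h2; simp [h1, tau_rev]
    · simp [h1, h2]

/-- On the rows `(b, b)` the product reduces to `Hb * Yb` with reversed indices. Every other row
`(a, b)` of the left factor has at most the two nonzero entries `(a, b)` and `(b', a')`. -/
lemma Xmat_mul {n : ℕ} {r s t : F} (hr : r ≠ 0) (hs : s ≠ 0) (ht : t ≠ 0) :
    Xmat n r s t * ptrans₁ (Hmat n r s t) = 1 := by
  ext ⟨a, b⟩ ⟨c, d⟩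
  by_cases hb : b = a
  · subst hb
    rw [Matrix.mul_apply, Fintype.sum_prod_type]
    simp only [Xmat_diag, ite_mul, zero_mul, sum_ite_eq', mem_univ, if_true, ptrans_diag ht]
    by_cases hd : d = c
    · subst hd
      simp only [if_true]
      have e : ∀ k, tau n t b * (tau n t k)⁻¹ * Hb n t b.rev k.rev *
          (tau n t k * (tau n t d)⁻¹ * Yb n t k.rev d.rev)
          = (tau n t b * (tau n t d)⁻¹) * (Hb n t b.rev k.rev * Yb n t k.rev d.rev) := by
        intro k
        have := tau_ne (n := n) ht k
        field_simp
      simp only [e, ← mul_sum]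
      have e' := Equiv.sum_comp Fin.revPerm (fun k => Hb n t b.rev k * Yb n t k d.rev)
      simp only [Fin.revPerm_apply] at e'
      rw [e', ← Matrix.mul_apply, Hb_mul_Yb ht]
      have := tau_ne (n := n) ht d
      by_cases h : b = d <;> simp [Matrix.one_apply, h, this]
    · simp only [hd, if_false, mul_zero, sum_const_zero]
      rw [Matrix.one_apply_ne]
      rintro ⟨rfl, rfl⟩; exact hd rfl
  · have ha := tau_ne (n := n) ht a
    have hX : ∀ y, Xmat n r s t (a, b) y = (if y = (a, b) then (wgt n r s t a b)⁻¹ else 0)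
        + (if y = (b.rev, a.rev) then
            lam t * (if a.rev < b then tau n t a * tau n t b else 0) else 0) := by
      rintro ⟨k, l⟩
      have e : k.rev = b ↔ k = b.rev := Fin.rev_eq_iff
      have h1 : (if k.rev = a.rev ∧ l = b then wgt n r s t a.rev b else 0)
          = if k = a ∧ l = b then (wgt n r s t a b)⁻¹ else 0 := by
        simp [Fin.rev_inj, wgt_rev]
      simp only [Xmat, Hmat, Matrix.of_apply, Fin.rev_rev, hb, h1, e, Prod.mk.injEq,
        false_and, if_false, sub_zero]
      rw [mul_add]
      congr 1
      · by_cases h1 : k = a ∧ l = b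
        · simp [h1, ha]
        · simp [h1]
      · by_cases h2 : k = b.rev ∧ l = a.rev
        · by_cases h5 : a.rev < b <;> simp [h2, h5, tau_rev]
          ring
        · simp [← and_assoc, h2]
    rw [mul_apply_two hX]
    have hb' : a.rev ≠ b.rev := fun e => hb (Fin.rev_injective e).symm
    rw [ptrans_off _ _ _ _ hb, ptrans_off _ _ _ _ hb', wgt_rev, wgt_rev_right]
    have hw := wgt_ne (n := n) hr hs ht a b
    simp only [Fin.rev_rev, tau_rev, Matrix.one_apply, Prod.mk.injEq, @eq_comm _ a c,
      @eq_comm _ b d]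
    by_cases h5 : a.rev < b
    · have h6 : ¬ b < a.rev := h5.not_gt
      simp only [h5, h6, and_true, and_false, if_true, if_false]
      by_cases h1 : c = a ∧ d = b
      · have h2 : ¬ (c = b.rev ∧ d = a.rev) := by
          rintro ⟨e1, e2⟩
          rw [← h1.2, e2] at h5
          exact lt_irrefl _ h5
        rw [if_pos h1, if_neg h2, if_neg h2, if_pos h1]
        field_simp
        ring
      · rw [if_neg h1, if_neg h1]
        by_cases h2 : c = b.rev ∧ d = a.rev
        · rw [if_pos h2, if_pos h2]
          have hsw := wgt_swap (r := r) (s := s) (t := t) a b (Ne.symm hb) h5.ne'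
          simp only [inv_inv, hsw]
          ring
        · simp [h2]
    · simp only [h5, and_false, if_false, mul_zero, zero_mul, add_zero, sub_zero]
      by_cases h1 : c = a ∧ d = b <;> simp [h1, hw]

end Crossing2

/-! ### Entries of the R-matrix -/

section Entries

variable {F : Type*} [Field F]

/-- Sum of indicators of `i = A` over `S`, in the presence of a side condition `Q`. -/
lemma sum_pick (S : Finset ℕ) (A : ℕ) (Q : Prop) [Decidable Q] :
    ∑ i ∈ S, (if A = i ∧ Q then (1 : F) else 0) = if A ∈ S ∧ Q then 1 else 0 := by
  by_cases hQ : Q <;> simp [hQ]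

lemma sum_pick₂ (S : Finset ℕ) (T : ℕ → Finset ℕ) (A B : ℕ) (Q : Prop) [Decidable Q]
    (f : ℕ → ℕ → F) :
    ∑ i ∈ S, ∑ j ∈ T i, (if A = i ∧ B = j ∧ Q then f i j else 0)
      = if A ∈ S ∧ B ∈ T A ∧ Q then f A B else 0 := by
  by_cases hQ : Q
  · simp only [hQ, and_true]
    have : ∀ i, ∑ j ∈ T i, (if A = i ∧ B = j then f i j else 0)
        = if A = i then (if B ∈ T A then f A B else 0) else 0 := by
      intro i
      by_cases hi : A = i
      · subst hi; simp
      · simp [hi]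
    simp only [this, sum_ite_eq]
    split_ifs <;> simp_all
  · simp [hQ]

lemma kron_apply (n a b c d : ℕ) (x y : Fin (2 * n + 1) × Fin (2 * n + 1)) :
    (Eunit F n a b ⊗ₖ Eunit F n c d) x y
      = if (x.1 : ℕ) + 1 = a ∧ (y.1 : ℕ) + 1 = b ∧ (x.2 : ℕ) + 1 = c ∧ (y.2 : ℕ) + 1 = d
        then 1 else 0 := by
  simp only [Matrix.kroneckerMap_apply, Eunit, Matrix.of_apply, ite_and]
  split_ifs <;> simp

lemma entry_flip (n i j : ℕ) (x y : Fin (2 * n + 1) × Fin (2 * n + 1)) :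
    (Eunit F n i j ⊗ₖ Eunit F n j i) x y
      = if (x.1 : ℕ) + 1 = i ∧ (x.2 : ℕ) + 1 = j ∧ (y.1 = x.2 ∧ y.2 = x.1) then 1 else 0 := by
  rw [kron_apply]
  congr 1
  simp only [Fin.ext_iff, eq_iff_iff]
  omega

lemma entry_flip' (n i j : ℕ) (x y : Fin (2 * n + 1) × Fin (2 * n + 1)) :
    (Eunit F n j i ⊗ₖ Eunit F n i j) x y
      = if (x.2 : ℕ) + 1 = i ∧ (x.1 : ℕ) + 1 = j ∧ (y.1 = x.2 ∧ y.2 = x.1) then 1 else 0 := by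
  rw [kron_apply]
  congr 1
  simp only [Fin.ext_iff, eq_iff_iff]
  omega

lemma entry_sum_flip (n : ℕ) (S : Finset ℕ) (T : ℕ → Finset ℕ)
    (x y : Fin (2 * n + 1) × Fin (2 * n + 1)) :
    (∑ i ∈ S, ∑ j ∈ T i, Eunit F n i j ⊗ₖ Eunit F n j i) x y
      = if (x.1 : ℕ) + 1 ∈ S ∧ (x.2 : ℕ) + 1 ∈ T (x.1 + 1) ∧ (y.1 = x.2 ∧ y.2 = x.1)
        then 1 else 0 := by
  simp only [Matrix.sum_apply, entry_flip]
  exact sum_pick₂ S T _ _ _ (fun _ _ => 1)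

lemma entry_sum_flip' (n : ℕ) (S : Finset ℕ) (T : ℕ → Finset ℕ)
    (x y : Fin (2 * n + 1) × Fin (2 * n + 1)) :
    (∑ i ∈ S, ∑ j ∈ T i, Eunit F n j i ⊗ₖ Eunit F n i j) x y
      = if (x.2 : ℕ) + 1 ∈ S ∧ (x.1 : ℕ) + 1 ∈ T (x.2 + 1) ∧ (y.1 = x.2 ∧ y.2 = x.1)
        then 1 else 0 := by
  simp only [Matrix.sum_apply, entry_flip']
  exact sum_pick₂ S T _ _ _ (fun _ _ => 1)

lemma Pmat_apply (n : ℕ) (x y : Fin (2 * n + 1) × Fin (2 * n + 1)) :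
    Pmat F n x y = if y = x.swap then 1 else 0 := by
  unfold Pmat
  rw [entry_sum_flip]
  have h1 := x.1.isLt
  have h2 := x.2.isLt
  congr 1
  simp [mem_Icc, Prod.ext_iff]
  omega

lemma Pmat_mul (n : ℕ)
    (M : Matrix (Fin (2 * n + 1) × Fin (2 * n + 1)) (Fin (2 * n + 1) × Fin (2 * n + 1)) F)
    (x y : Fin (2 * n + 1) × Fin (2 * n + 1)) : (Pmat F n * M) x y = M x.swap y := by
  simp [Matrix.mul_apply, Pmat_apply]

lemma sum_ii (n : ℕ) (S : Finset ℕ) (x y : Fin (2 * n + 1) × Fin (2 * n + 1)) :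
    (∑ i ∈ S, Eunit F n i i ⊗ₖ Eunit F n i i) x y
      = if (x.1 : ℕ) + 1 ∈ S ∧ (x.1 = x.2 ∧ (y.1 = x.2 ∧ y.2 = x.1)) then 1 else 0 := by
  rw [Matrix.sum_apply, ← sum_pick]
  refine sum_congr rfl fun i _ => ?_
  rw [kron_apply]
  congr 1
  simp only [Fin.ext_iff, eq_iff_iff]
  omega

lemma sum_im (n m : ℕ) (S : Finset ℕ) (x y : Fin (2 * n + 1) × Fin (2 * n + 1)) :
    (∑ i ∈ S, Eunit F n i m ⊗ₖ Eunit F n m i) x y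
      = if (x.1 : ℕ) + 1 ∈ S ∧ ((x.2 : ℕ) + 1 = m ∧ (y.1 = x.2 ∧ y.2 = x.1)) then 1 else 0 := by
  rw [Matrix.sum_apply, ← sum_pick]
  refine sum_congr rfl fun i _ => ?_
  rw [entry_flip]

lemma sum_mi (n m : ℕ) (S : Finset ℕ) (x y : Fin (2 * n + 1) × Fin (2 * n + 1)) :
    (∑ i ∈ S, Eunit F n m i ⊗ₖ Eunit F n i m) x y
      = if (x.2 : ℕ) + 1 ∈ S ∧ ((x.1 : ℕ) + 1 = m ∧ (y.1 = x.2 ∧ y.2 = x.1)) then 1 else 0 := by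
  rw [Matrix.sum_apply, ← sum_pick]
  refine sum_congr rfl fun i _ => ?_
  rw [entry_flip']

lemma sum_anti (n : ℕ) (S : Finset ℕ) (x y : Fin (2 * n + 1) × Fin (2 * n + 1)) :
    (∑ i ∈ S, Eunit F n (pr n i) i ⊗ₖ Eunit F n i (pr n i)) x y
      = if (x.2 : ℕ) + 1 ∈ S ∧ ((x.1 : ℕ) + 1 = pr n (x.2 + 1) ∧ (y.1 = x.2 ∧ y.2 = x.1))
        then 1 else 0 := by
  rw [Matrix.sum_apply, ← sum_pick]
  refine sum_congr rfl fun i _ => ?_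
  rw [entry_flip']
  congr 1
  rw [eq_iff_iff]
  constructor
  · rintro ⟨rfl, h⟩; exact ⟨rfl, h⟩
  · rintro ⟨rfl, h⟩; exact ⟨rfl, h⟩

lemma sum_tri (n : ℕ) (x y : Fin (2 * n + 1) × Fin (2 * n + 1)) :
    (∑ i ∈ Icc 1 (2 * n + 1), ∑ j ∈ Icc 1 (i - 1), Eunit F n i i ⊗ₖ Eunit F n j j) x y
      = if y.1 = x.1 ∧ y.2 = x.2 ∧ x.2 < x.1 then 1 else 0 := by
  have e : ∀ i j, (Eunit F n i i ⊗ₖ Eunit F n j j) x y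
      = if (x.1 : ℕ) + 1 = i ∧ (x.2 : ℕ) + 1 = j ∧ (y.1 = x.1 ∧ y.2 = x.2) then 1 else 0 := by
    intro i j
    rw [kron_apply]
    congr 1
    simp only [Fin.ext_iff, eq_iff_iff]
    omega
  simp only [Matrix.sum_apply, e]
  rw [sum_pick₂ _ (fun i => Icc 1 (i - 1)) _ _ _ (fun _ _ => 1)]
  have h1 := x.1.isLt
  congr 1
  simp only [mem_Icc, eq_iff_iff, Fin.lt_def]
  omega

lemma sum_K (n : ℕ) {t : F} (ht : t ≠ 0) (x y : Fin (2 * n + 1) × Fin (2 * n + 1)) :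
    (∑ i ∈ Icc 1 (2 * n + 1), ∑ j ∈ Icc 1 (i - 1),
        t ^ (mwt n i - mwt n j) • (Eunit F n i (pr n j) ⊗ₖ Eunit F n (pr n i) j)) x y
      = if x.1 = x.2.rev ∧ y.2 = y.1.rev ∧ x.2 < y.1 then
          tau n t y.1 * (tau n t x.2)⁻¹ else 0 := by
  have h1 := x.1.isLt
  have h2 := x.2.isLt
  have h3 := y.1.isLt
  have h4 := y.2.isLt
  have e : ∀ i j, (t ^ (mwt n i - mwt n j) • (Eunit F n i (pr n j) ⊗ₖ Eunit F n (pr n i) j)) x y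
      = if (x.1 : ℕ) + 1 = i ∧ (y.2 : ℕ) + 1 = j ∧ (x.1 = x.2.rev ∧ y.2 = y.1.rev) then
          t ^ (mwt n i - mwt n j) else 0 := by
    intro i j
    rw [Matrix.smul_apply, kron_apply, smul_ite, smul_eq_mul, mul_one, smul_zero]
    congr 1
    simp only [Fin.ext_iff, eq_iff_iff, rev_val, pr]
    omega
  simp only [Matrix.sum_apply, e]
  rw [sum_pick₂ _ (fun i => Icc 1 (i - 1)) _ _ _ (fun i j => t ^ (mwt n i - mwt n j))]
  have hc : ((x.1 : ℕ) + 1 ∈ Icc 1 (2 * n + 1) ∧ (y.2 : ℕ) + 1 ∈ Icc 1 ((x.1 : ℕ) + 1 - 1) ∧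
      (x.1 = x.2.rev ∧ y.2 = y.1.rev)) ↔ (x.1 = x.2.rev ∧ y.2 = y.1.rev ∧ x.2 < y.1) := by
    simp only [mem_Icc, Fin.ext_iff, rev_val, Fin.lt_def]
    omega
  rw [if_congr hc rfl rfl]
  split_ifs with h
  · rw [zpow_sub₀ ht]
    change tau n t x.1 / tau n t y.2 = _
    rw [h.1, h.2.1, tau_rev, tau_rev, div_inv_eq_mul, mul_comm]
  · rfl

/-- The four index ranges with coefficient `r⁻¹s⁻¹` in `R` are disjoint, and together they select the
pairs in `below`. Exchanging `a` and `b` gives the ranges with coefficient `rs`. -/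
lemma below_sum (n : ℕ) (b a : Fin (2 * n + 1)) :
    (if (b : ℕ) + 1 ∈ Icc 1 n ∧ (a : ℕ) + 1 ∈ Icc ((b : ℕ) + 1 + 1) n then (1 : F) else 0)
    + (if (b : ℕ) + 1 ∈ Icc 2 n ∧ (a : ℕ) + 1 ∈ Icc (pr n ((b : ℕ) + 1 - 1)) (pr n 1)
        then 1 else 0)
    + (if (a : ℕ) + 1 ∈ Icc 1 (n - 1) ∧ (b : ℕ) + 1 ∈ Icc (pr n n) (pr n ((a : ℕ) + 1 + 1))
        then 1 else 0)
    + (if (a : ℕ) + 1 ∈ Icc (pr n n) (pr n 2) ∧ (b : ℕ) + 1 ∈ Icc ((a : ℕ) + 1 + 1) (pr n 1)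
        then 1 else 0)
    = if below n a b then 1 else 0 := by
  have ha := a.isLt
  have hb := b.isLt
  simp only [mem_Icc, pr]
  split_ifs <;> first | omega | (simp only [below] at *; omega) | simp

/-- The entries of `R` at flipped positions add up to the weight `w(a, b)`. -/
lemma wgt_sum {n : ℕ} {r s t : F} (hts : t ^ 2 = r⁻¹ * s) (a b : Fin (2 * n + 1)) :
    r⁻¹ * s * (if (b : ℕ) + 1 ∈ (Icc 1 (2 * n + 1)).erase (n + 1) ∧ b = a then 1 else 0)
      + r⁻¹ * s⁻¹ * (if below n a b then 1 else 0)
      + r * s * (if below n b a then 1 else 0)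
      + (if (b : ℕ) + 1 ∈ (Icc 1 (2 * n + 1)).erase (n + 1) ∧ (a : ℕ) + 1 = n + 1
        then 1 else 0)
      + (if (a : ℕ) + 1 ∈ (Icc 1 (2 * n + 1)).erase (n + 1) ∧ (b : ℕ) + 1 = n + 1
        then 1 else 0)
      + r * s⁻¹ * (if (a : ℕ) + 1 ∈ (Icc 1 (2 * n + 1)).erase (n + 1) ∧
          (b : ℕ) + 1 = pr n (a + 1) then 1 else 0)
      + (if (b : ℕ) + 1 = n + 1 ∧ (a : ℕ) + 1 = n + 1 then 1 else 0)
      = wgt n r s t a b := by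
  have hti : (t ^ 2)⁻¹ = r * s⁻¹ := by rw [hts]; simp [mul_comm]
  have ha := a.isLt
  have hb := b.isLt
  have hm : ∀ k : Fin (2 * n + 1),
      (k : ℕ) + 1 ∈ (Icc 1 (2 * n + 1)).erase (n + 1) ↔ (k : ℕ) ≠ n := by
    intro k
    have := k.isLt
    simp only [mem_erase, mem_Icc]
    omega
  have hp : (b : ℕ) + 1 = pr n (a + 1) ↔ (a : ℕ) + b = 2 * n := by
    unfold pr; omega
  have hd : (b : ℕ) = a ∨ (a : ℕ) + b = 2 * n ∨ (a : ℕ) = n ∨ (b : ℕ) = n →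
      ¬ below n a b ∧ ¬ below n b a := by
    unfold below; omega
  have hg : (b : ℕ) ≠ a → (a : ℕ) + b ≠ 2 * n → (a : ℕ) ≠ n → (b : ℕ) ≠ n →
      (below n b a ↔ ¬ below n a b) := by
    unfold below; omega
  unfold wgt
  rw [hti, hts, mul_inv]
  simp only [hm, hp, add_left_inj, Fin.ext_iff]
  by_cases h1 : (a : ℕ) = n
  · have h := hd (by tauto)
    rw [if_neg h.1, if_neg h.2]
    by_cases h2 : (b : ℕ) = n
    · simp [h1, h2]
    · have h3 : n + (b : ℕ) ≠ 2 * n := by omega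
      simp [h1, h2, h3]
  by_cases h2 : (b : ℕ) = n
  · have h := hd (by tauto)
    have h3 : (a : ℕ) + n ≠ 2 * n := by omega
    rw [if_neg h.1, if_neg h.2]
    simp [h1, h2, h3]
  by_cases h3 : (b : ℕ) = a
  · have h := hd (by tauto)
    have h4 : (a : ℕ) + a ≠ 2 * n := by omega
    rw [if_neg h.1, if_neg h.2]
    simp [h1, h3, h4]
  have h3' : (a : ℕ) ≠ b := Ne.symm h3
  by_cases h4 : (a : ℕ) + b = 2 * n
  · have h := hd (by tauto)
    simp [h.1, h.2, h1, h2, h3, h3', h4]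
  have h := hg h3 h4 h1 h2
  by_cases h5 : below n a b <;> simp [h, h1, h2, h3, h3', h4, h5]

/-- Left multiplication by `P` swaps the row index, so this is the statement `P R = Hmat` entry by
entry. -/
lemma Rmat_apply_s18 {n : ℕ} {r s t : F} (ht : t ≠ 0) (hts : t ^ 2 = r⁻¹ * s)
    (x y : Fin (2 * n + 1) × Fin (2 * n + 1)) :
    Rmat F n r s t x y = Hmat n r s t x.swap y := by
  obtain ⟨b, a⟩ := x
  have ha := a.isLt
  have hb := b.isLt
  have hti : (t ^ 2)⁻¹ = r * s⁻¹ := by rw [hts]; simp [mul_comm]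
  have hab := below_sum (F := F) n b a
  have hba := below_sum (F := F) n a b
  unfold Rmat
  simp only [Matrix.add_apply, Matrix.sub_apply, Matrix.smul_apply, smul_eq_mul, entry_sum_flip,
    entry_sum_flip', sum_ii, sum_im, sum_mi, sum_anti, sum_tri, sum_K n ht, entry_flip, Hmat,
    Matrix.of_apply, Prod.swap, ← and_assoc]
  simp only [and_assoc]
  by_cases hD : y.1 = a ∧ y.2 = b
  · obtain ⟨y1, y2⟩ := y
    obtain ⟨rfl, rfl⟩ := hD
    dsimp only at ha hb hab hba ⊢
    have e2 : ¬ (y1 = y2 ∧ y2 = y1 ∧ y1 < y2) := by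
      rintro ⟨rfl, -, h⟩; exact lt_irrefl _ h
    simp only [if_neg e2, lt_irrefl, and_false, and_true, if_false, sub_zero,
      mul_zero, add_zero, if_true]
    have key := wgt_sum hts y1 y2
    linear_combination key + r⁻¹ * s⁻¹ * hab + r * s * hba
  · simp only [hD, and_false, if_false]
    unfold lam
    rw [hti, hts]
    ring

end Entries

/-! ### The quantum metric and the crossing relations -/

section Metric

variable {F : Type*} [Field F]

lemma Pmat_mul_Rmat {n : ℕ} {r s t : F} (ht : t ≠ 0) (hts : t ^ 2 = r⁻¹ * s) :
    Pmat F n * Rmat F n r s t = Hmat n r s t := by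
  ext x y
  rw [Pmat_mul, Rmat_apply_s18 ht hts, Prod.swap_swap]

lemma Cmet_apply {n : ℕ} {t : F} (i j : Fin (2 * n + 1)) :
    Cmet F n t i j = if j = i.rev then tau n t i else 0 := by
  have hi := i.isLt
  have hj := j.isLt
  unfold Cmet tau
  rw [Matrix.of_apply]
  congr 1
  simp only [pr, Fin.ext_iff, rev_val, eq_iff_iff]
  omega

lemma Cmet_mul_self {n : ℕ} {t : F} (ht : t ≠ 0) : Cmet F n t * Cmet F n t = 1 := by
  ext i j
  have := tau_ne (n := n) ht i
  rw [Matrix.mul_apply, sum_eq_single i.rev]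
  · simp [Cmet_apply, tau_rev, Matrix.one_apply, this, @eq_comm _ j i]
  · intro k _ hk
    simp [Cmet_apply, hk]
  · simp

/-- Conjugating `R̂` by `C₁` gives the inverse of `R̂^{t₁}`. -/
lemma Xmat_eq {n : ℕ} {r s t : F} :
    Xmat n r s t = (Cmet F n t ⊗ₖ (1 : Matrix (Fin (2 * n + 1)) (Fin (2 * n + 1)) F))
      * Hmat n r s t * (Cmet F n t ⊗ₖ (1 : Matrix (Fin (2 * n + 1)) (Fin (2 * n + 1)) F)) := by
  ext ⟨a, b⟩ ⟨c, d⟩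
  have e : ∀ k : Fin (2 * n + 1), c = k.rev ↔ k = c.rev := fun k => by
    rw [eq_comm, Fin.rev_eq_iff]
  simp only [Matrix.mul_apply, Fintype.sum_prod_type, Matrix.kroneckerMap_apply, Cmet_apply,
    Matrix.one_apply, mul_ite, ite_mul, mul_one, mul_zero, zero_mul, sum_ite_eq, sum_ite_eq',
    mem_univ, if_true, e]
  simp only [Xmat, Matrix.of_apply, tau_rev]
  ring

/-- Conjugating `R̂` by `C₂` gives the second partial transpose of `R̂⁻¹`. -/
lemma ptrans_Ymat {n : ℕ} {r s t : F} (ht : t ≠ 0) :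
    ptrans₂ (Ymat n r s t)
      = ((1 : Matrix (Fin (2 * n + 1)) (Fin (2 * n + 1)) F) ⊗ₖ Cmet F n t)
        * Hmat n r s t * ((1 : Matrix (Fin (2 * n + 1)) (Fin (2 * n + 1)) F) ⊗ₖ Cmet F n t) := by
  ext ⟨a, b⟩ ⟨c, d⟩
  have e : ∀ k : Fin (2 * n + 1), d = k.rev ↔ k = d.rev := fun k => by
    rw [eq_comm, Fin.rev_eq_iff]
  simp only [Matrix.mul_apply, Fintype.sum_prod_type, Matrix.kroneckerMap_apply, Cmet_apply,
    Matrix.one_apply, mul_ite, ite_mul, one_mul, mul_zero, zero_mul, sum_ite_eq,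
    sum_ite_eq', mem_univ, if_true, e]
  simp only [ptrans₂, Ymat, Hmat, Matrix.of_apply, tau_rev]
  have hta := tau_ne (n := n) ht
  have e1 : (c = a ∧ d.rev = b.rev) ↔ (c = a ∧ b = d) := by
    rw [Fin.rev_inj, @eq_comm _ d b]
  have e3 : (c = b.rev ∧ d.rev = a ∧ a < b.rev) ↔ (d = a.rev ∧ b = c.rev ∧ a < c) := by
    constructor
    · rintro ⟨rfl, rfl, h⟩; simpa using h
    · rintro ⟨rfl, rfl, h⟩; simpa using h
  rw [if_congr e1 rfl rfl, if_congr e3 rfl rfl, wgt_rev_right]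
  have e2 : (b.rev = a.rev ∧ d.rev = c.rev ∧ a < c) ↔ (c = d ∧ b = a ∧ a < d) := by
    rw [Fin.rev_inj, Fin.rev_inj]
    constructor
    · rintro ⟨rfl, rfl, h⟩; exact ⟨rfl, rfl, h⟩
    · rintro ⟨rfl, rfl, h⟩; exact ⟨rfl, rfl, h⟩
  have t1 : tau n t b * (if c = a ∧ b = d then (wgt n r s t a b)⁻¹ else 0) * (tau n t d)⁻¹
      = if c = a ∧ b = d then (wgt n r s t a d)⁻¹ else 0 := by
    split_ifs with h
    · have := hta d
      rw [h.2]; field_simp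
    · simp
  have t2 : tau n t b * (if c = d ∧ b = a ∧ a < d then tau n t c * (tau n t a)⁻¹ else 0)
      * (tau n t d)⁻¹ = if c = d ∧ b = a ∧ a < d then 1 else 0 := by
    split_ifs with h
    · have := hta a
      have := hta d
      rw [h.1, h.2.1]; field_simp
    · simp
  have t3 : tau n t b * (if d = a.rev ∧ b = c.rev ∧ a < c then 1 else 0) * (tau n t d)⁻¹
      = if d = a.rev ∧ b = c.rev ∧ a < c then tau n t a * (tau n t c)⁻¹ else 0 := by
    split_ifs with h
    · rw [h.1, h.2.1, tau_rev, tau_rev, inv_inv]; ring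
    · simp
  rw [if_congr e2 rfl rfl, ← t1, ← t2, ← t3]
  ring

end Metric

/-- **Proposition 3.18** (crossing symmetry). With `R̂ = P R`, `C₁ = C ⊗ I`, `C₂ = I ⊗ C`:
`R̂` and `R̂^{t₁}` are invertible, `R̂ = C₁ (R̂^{t₁})⁻¹ C₁⁻¹` and `R̂ = C₂ (R̂⁻¹)^{t₂} C₂⁻¹`. -/
theorem proposition_3_18 (n : ℕ) (hn : 1 ≤ n)
    (F : Type*) [Field F] (r s t : F)
    (hr : r ≠ 0) (hs : s ≠ 0) (ht : t ≠ 0) (hts : t ^ 2 = r⁻¹ * s) :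
    IsUnit (Pmat F n * Rmat F n r s t) ∧
    IsUnit (ptrans₁ (Pmat F n * Rmat F n r s t)) ∧
    Pmat F n * Rmat F n r s t
      = (Cmet F n t ⊗ₖ (1 : Matrix (Fin (2 * n + 1)) (Fin (2 * n + 1)) F))
          * (ptrans₁ (Pmat F n * Rmat F n r s t))⁻¹
          * (Cmet F n t ⊗ₖ (1 : Matrix (Fin (2 * n + 1)) (Fin (2 * n + 1)) F))⁻¹ ∧
    Pmat F n * Rmat F n r s t
      = ((1 : Matrix (Fin (2 * n + 1)) (Fin (2 * n + 1)) F) ⊗ₖ Cmet F n t)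
          * ptrans₂ ((Pmat F n * Rmat F n r s t)⁻¹)
          * ((1 : Matrix (Fin (2 * n + 1)) (Fin (2 * n + 1)) F) ⊗ₖ Cmet F n t)⁻¹ := by
  have hC : Cmet F n t * Cmet F n t = 1 := Cmet_mul_self ht
  have hC₁ : (Cmet F n t ⊗ₖ (1 : Matrix (Fin (2 * n + 1)) (Fin (2 * n + 1)) F))
      * (Cmet F n t ⊗ₖ (1 : Matrix (Fin (2 * n + 1)) (Fin (2 * n + 1)) F)) = 1 := by
    rw [← Matrix.mul_kronecker_mul, hC, one_mul, Matrix.one_kronecker_one]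
  have hC₂ : ((1 : Matrix (Fin (2 * n + 1)) (Fin (2 * n + 1)) F) ⊗ₖ Cmet F n t)
      * ((1 : Matrix (Fin (2 * n + 1)) (Fin (2 * n + 1)) F) ⊗ₖ Cmet F n t) = 1 := by
    rw [← Matrix.mul_kronecker_mul, hC, one_mul, Matrix.one_kronecker_one]
  have hX := Xmat_mul (n := n) hr hs ht
  have hY := Ymat_mul_Hmat (n := n) hr hs ht
  rw [Pmat_mul_Rmat ht hts, Matrix.inv_eq_left_inv hX, Matrix.inv_eq_left_inv hY,
    Matrix.inv_eq_left_inv hC₁, Matrix.inv_eq_left_inv hC₂, Xmat_eq, ptrans_Ymat ht]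
  refine ⟨IsUnit.of_mul_eq_one _ (mul_eq_one_comm.mp hY),
    IsUnit.of_mul_eq_one _ (mul_eq_one_comm.mp hX), ?_, ?_⟩
  · rw [← mul_assoc, ← mul_assoc, hC₁, one_mul, mul_assoc, hC₁, mul_one]
  · rw [← mul_assoc, ← mul_assoc, hC₂, one_mul, mul_assoc, hC₂, mul_one]
end
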